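/- arXiv:2406.03021 — 2 statements merged into one kernel-verified Lean document; each statement's English description precedes it below -/
import Mathlib

section
/- Let n ≥ 3 and let ω be a skew-symmetric bilinear form on V such that H_V is contained in the kernel of the convolution operator Q_ω on ⋀^{n-1}V. Then there exists a real number a such that ω(v_i, v_{i+1}) = (−1)^i·a for all 1 ≤ i ≤ 2n−3, and ω(v_i, v_j) = 0 for all j > i+1. -/
open scoped Classical

noncomputable section

/-- `P` is a set partition of the finite ground set `G` (of integers): its blocks are nonempty
subsets of `G`, and every element of `G` lies in exactly one block. -/
def IsPartitionOf (G : Finset ℕ) (P : Finset (Finset ℕ)) : Prop :=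
  (∀ B ∈ P, B.Nonempty) ∧ (∀ B ∈ P, B ⊆ G) ∧ ∀ x ∈ G, ∃! B, B ∈ P ∧ x ∈ B

/-- A collection of blocks is non-crossing: there are no `a < b < c < d` with `a, c` in one
block and `b, d` in a different block. -/
def NonCrossing (P : Finset (Finset ℕ)) : Prop :=
  ∀ a b c d : ℕ, a < b → b < c → c < d →
    ∀ B₁ ∈ P, ∀ B₂ ∈ P, a ∈ B₁ → c ∈ B₁ → b ∈ B₂ → d ∈ B₂ → B₁ = B₂

/-- The set `{1, 3, …, 2n-1}` of "barred" boundary indices `k̄ = 2k-1`. -/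
def oddSet (n : ℕ) : Finset ℕ := (Finset.range n).image fun k => 2 * k + 1

/-- The set `{2, 4, …, 2n}` of "tilde" boundary indices `k̃ = 2k`. -/
def evenSet (n : ℕ) : Finset ℕ := (Finset.range n).image fun k => 2 * k + 2

/-- `σ` is a non-crossing partition of `{1̄,…,n̄}` and `σd` is its dual: a non-crossing
partition of `{1̃,…,ñ}` such that the merged partition `σ ∪ σd` is non-crossing and the
numbers of blocks add up to `n + 1`. -/
def IsNCPair (n : ℕ) (σ σd : Finset (Finset ℕ)) : Prop :=
  IsPartitionOf (oddSet n) σ ∧ NonCrossing σ ∧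
    IsPartitionOf (evenSet n) σd ∧ NonCrossing σd ∧
    NonCrossing (σ ∪ σd) ∧ σ.card + σd.card = n + 1

/-- An `(n-1)`-element subset `I ⊆ {1,…,2n}` is concordant with `σ` if every block of `σ`
and every block of the dual `σd` contains exactly one element not in `I`. -/
def ConcordantWith (σ σd : Finset (Finset ℕ)) (I : Finset ℕ) : Prop :=
  ∀ B ∈ σ ∪ σd, (B \ I).card = 1

/-- `stdE n i` is the `i`-th standard basis vector (1-indexed) of `ℝ^{2n}`. -/
def stdE (n i : ℕ) : Fin (2 * n) → ℝ := fun t => if (t : ℕ) + 1 = i then 1 else 0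

/-- The wedge `e_{i_1} ∧ … ∧ e_{i_k}` over the increasing enumeration `i_1 < … < i_k`
of a finite set `I` of (1-indexed) indices. -/
def finsetWedge (n k : ℕ) (I : Finset ℕ) : ExteriorAlgebra ℝ (Fin (2 * n) → ℝ) :=
  ExteriorAlgebra.ιMulti ℝ k fun p => stdE n ((I.sort (· ≤ ·)).getD p.val 0)

/-- The concordance vector `w_σ = Σ_I e_I ∈ ⋀^{n-1} ℝ^{2n}`, the sum over all
`(n-1)`-element subsets `I` of `{1,…,2n}` concordant with `σ`. -/
def concVec (n : ℕ) (σ σd : Finset (Finset ℕ)) : ExteriorAlgebra ℝ (Fin (2 * n) → ℝ) :=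
  ∑ I ∈ ((Finset.Icc 1 (2 * n)).powersetCard (n - 1)).filter (ConcordantWith σ σd),
    finsetWedge n (n - 1) I

end
noncomputable section

/-- The subspace `V = {v ∈ ℝ^{2n} : Σ_{i=1}^n (-1)^i v_{2i} = 0, Σ_{i=1}^n (-1)^i v_{2i-1} = 0}`. -/
def Vsub (n : ℕ) : Submodule ℝ (Fin (2 * n) → ℝ) :=
  LinearMap.ker (∑ k : Fin n, ((-1 : ℝ)) ^ (k.val + 1) •
      (LinearMap.proj (⟨2 * k.val + 1, by have := k.isLt; omega⟩ : Fin (2 * n)) :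
        (Fin (2 * n) → ℝ) →ₗ[ℝ] ℝ)) ⊓
  LinearMap.ker (∑ k : Fin n, ((-1 : ℝ)) ^ (k.val + 1) •
      (LinearMap.proj (⟨2 * k.val, by have := k.isLt; omega⟩ : Fin (2 * n)) :
        (Fin (2 * n) → ℝ) →ₗ[ℝ] ℝ))

/-- The basis vectors `v_k = e_k + e_{k+2}`, `k = 1, …, 2n-2`, of the subspace `V`. -/
def vVec (n k : ℕ) : Fin (2 * n) → ℝ := stdE n k + stdE n (k + 2)

/-- The wedge `x_1 ∧ … ∧ x_k` of vectors of a module, as an element of the `k`-th exterior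
power (a submodule of the exterior algebra). -/
def wedgeIn (k : ℕ) {M : Type*} [AddCommGroup M] [Module ℝ M] (x : Fin k → M) :
    ↥(⋀[ℝ]^k M) :=
  ⟨ExteriorAlgebra.ιMulti ℝ k x, ExteriorAlgebra.ιMulti_range ℝ k (Set.mem_range_self x)⟩

/-- The subspace `H_V ⊆ ⋀^{n-1} V`: the span of the preimages in `⋀^{n-1} V` of the
concordance vectors `w_σ ∈ ⋀^{n-1} ℝ^{2n}` under the map induced by the inclusion `V ⊆ ℝ^{2n}`. -/
def HV (n : ℕ) : Submodule ℝ ↥(⋀[ℝ]^(n - 1) ↥(Vsub n)) :=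
  Submodule.span ℝ {y | ∃ σ σd : Finset (Finset ℕ), IsNCPair n σ σd ∧
    ExteriorAlgebra.map ((Vsub n).subtype) (y : ExteriorAlgebra ℝ ↥(Vsub n)) = concVec n σ σd}

end


/-- The order embedding that skips `p < q`. -/
def skipEmb (k : ℕ) (p q : ℕ) (_hpq : p < q) (_hq : q < k + 2) : Fin k ↪o Fin (k + 2) :=
  OrderEmbedding.ofStrictMono
    (fun r => ⟨if r.val < p then r.val else if r.val + 1 < q then r.val + 1 else r.val + 2, by
      have := r.isLt; split_ifs <;> omega⟩)
    (by
      intro a b hab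
      have hab' : a.val < b.val := hab
      simp only [Fin.lt_def]
      split_ifs <;> omega)

lemma skipEmb_val (k p q : ℕ) (hpq : p < q) (hq : q < k + 2) (r : Fin k) :
    (skipEmb k p q hpq hq r).val =
      if r.val < p then r.val else if r.val + 1 < q then r.val + 1 else r.val + 2 := rfl

lemma skipEmb_ne_left (k p q : ℕ) (hpq : p < q) (hq : q < k + 2) (r : Fin k) :
    (skipEmb k p q hpq hq r).val ≠ p ∧ (skipEmb k p q hpq hq r).val ≠ q := by
  rw [skipEmb_val]; constructor <;> split_ifs <;> omega

lemma skipEmb_surj (k p q : ℕ) (hpq : p < q) (hq : q < k + 2) (x : ℕ) (hx : x < k + 2)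
    (h1 : x ≠ p) (h2 : x ≠ q) : ∃ r, (skipEmb k p q hpq hq r).val = x := by
  refine ⟨⟨if x < p then x else if x < q then x - 1 else x - 2, ?_⟩, ?_⟩
  · split_ifs <;> omega
  · rw [skipEmb_val]; simp only; split_ifs <;> omega

lemma skipEmb_inj (k p q p' q' : ℕ) (hpq : p < q) (hq : q < k + 2) (hpq' : p' < q')
    (hq' : q' < k + 2) (h : skipEmb k p q hpq hq = skipEmb k p' q' hpq' hq') :
    p = p' ∧ q = q' := by
  have key : ∀ x, x < k + 2 → x ≠ p → x ≠ q → x ≠ p' ∧ x ≠ q' := by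
    intro x hx h1 h2
    obtain ⟨r, hr⟩ := skipEmb_surj k p q hpq hq x hx h1 h2
    rw [h] at hr
    rw [← hr]
    exact skipEmb_ne_left k p' q' hpq' hq' r
  have hp := key p' (by omega)
  have hq1 := key q' (by omega)
  omega

lemma extract_form (k : ℕ) {M : Type*} [AddCommGroup M] [Module ℝ M]
    (ω : M →ₗ[ℝ] M →ₗ[ℝ] ℝ) (x : Fin (k + 2) → M) (f : Fin (k + 2) → Module.Dual ℝ M)
    (h₁ : ∀ i, f i (x i) = 1) (h₀ : ∀ i j, i ≠ j → f i (x j) = 0)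
    (h : ∑ p : Fin (k + 2), ∑ q : Fin (k + 2),
          (if p < q then
            ((-1 : ℝ) ^ (p.val + q.val + 1) * ω (x p) (x q)) •
              wedgeIn k (fun r : Fin k =>
                (((List.ofFn x).eraseIdx q.val).eraseIdx p.val).getD r.val 0)
          else 0) = 0) (p q : Fin (k + 2)) (hpq : p < q) : ω (x p) (x q) = 0 := by
  have hw : ∀ (p q : Fin (k + 2)) (hpq : p < q), wedgeIn k (fun r : Fin k =>
      (((List.ofFn x).eraseIdx q.val).eraseIdx p.val).getD r.val 0) =
      exteriorPower.ιMulti ℝ k (x ∘ skipEmb k p q hpq q.isLt) := by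
    intro p q hpq
    have hpq' : p.val < q.val := hpq
    have hql := q.isLt
    apply Subtype.ext
    change ExteriorAlgebra.ιMulti ℝ k _ = ExteriorAlgebra.ιMulti ℝ k _
    congr 1
    ext1 r
    have hr := r.isLt
    have hv := skipEmb_val k p q hpq q.isLt r
    rw [List.getD_eq_getElem?_getD, List.getElem?_eraseIdx]
    simp only [List.getElem?_eraseIdx, Function.comp]
    have e : ∀ j (hj : j < k + 2), ((List.ofFn x)[j]?).getD 0 = x ⟨j, hj⟩ := by
      intro j hj
      rw [List.getElem?_eq_getElem (by rw [List.length_ofFn]; exact hj), List.getElem_ofFn]; rfl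
    split_ifs with c1 c2 c3
    · rw [e _ (by omega)]; congr 1; apply Fin.ext; rw [hv]; simp only []; split_ifs; omega
    · omega
    · rw [e _ (by omega)]; congr 1; apply Fin.ext; rw [hv]; simp only []; split_ifs; omega
    · rw [e _ (by omega)]; congr 1; apply Fin.ext; rw [hv]; simp only []; split_ifs; omega
  have := congrArg (exteriorPower.pairingDual ℝ M k
    (exteriorPower.ιMulti _ _ (f ∘ skipEmb k p q hpq q.isLt))) h
  rw [map_zero, map_sum] at this
  simp only [map_sum] at this
  rw [Finset.sum_eq_single p, Finset.sum_eq_single q] at this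
  · rw [if_pos hpq, map_smul, hw p q hpq,
      exteriorPower.pairingDual_apply_apply_eq_one x f h₁ h₀] at this
    simpa using this
  · intro q' _ hne
    split_ifs with c
    · rw [map_smul, hw p q' c, exteriorPower.pairingDual_apply_apply_eq_one_zero x f h₀, smul_zero]
      intro hh
      exact hne (Fin.ext (skipEmb_inj _ _ _ _ _ _ _ _ _ hh).2.symm)
    · simp
  · simp
  · intro p' _ hne
    apply Finset.sum_eq_zero
    intro q' _
    split_ifs with c
    · rw [map_smul, hw p' q' c, exteriorPower.pairingDual_apply_apply_eq_one_zero x f h₀, smul_zero]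
      intro hh
      exact hne (Fin.ext (skipEmb_inj _ _ _ _ _ _ _ _ _ hh).1.symm)
    · simp
  · simp

/-- Block function of the partition with two distinguished blocks. -/
def blk (B₁ B₂ : Finset ℕ) (x : ℕ) : Finset ℕ :=
  if x ∈ B₁ then B₁ else if x ∈ B₂ then B₂ else {x}

/-- Hypotheses describing the two distinguished blocks. -/
structure TwoBlocks (n s t : ℕ) (B₁ B₂ : Finset ℕ) : Prop where
  hs : 1 ≤ s
  hst : s ≤ t
  htn : t ≤ 2 * n
  par : s % 2 = t % 2
  m1 : ∀ x, x ∈ B₁ ↔ s ≤ x ∧ x ≤ t ∧ x % 2 = s % 2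
  m2 : ∀ x, x ∈ B₂ ↔ 1 ≤ x ∧ x ≤ 2 * n ∧ x % 2 ≠ s % 2 ∧ (x < s ∨ t < x)
  ne : B₂.Nonempty
  card : B₁.card + B₂.card = n + 1

lemma mem_oddSet (n x : ℕ) : x ∈ oddSet n ↔ 1 ≤ x ∧ x ≤ 2 * n ∧ x % 2 = 1 := by
  simp only [oddSet, Finset.mem_image, Finset.mem_range]
  constructor
  · rintro ⟨k, hk, rfl⟩; omega
  · intro h; exact ⟨x / 2, by omega, by omega⟩

lemma mem_evenSet (n x : ℕ) : x ∈ evenSet n ↔ 1 ≤ x ∧ x ≤ 2 * n ∧ x % 2 = 0 := by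
  simp only [evenSet, Finset.mem_image, Finset.mem_range]
  constructor
  · rintro ⟨k, hk, rfl⟩; omega
  · intro h; exact ⟨x / 2 - 1, by omega, by omega⟩

section TB
variable {n s t : ℕ} {B₁ B₂ : Finset ℕ}

lemma TwoBlocks.disj (h : TwoBlocks n s t B₁ B₂) : Disjoint B₁ B₂ := by
  rw [Finset.disjoint_left]
  intro x h1 h2
  rw [h.m1] at h1
  rw [h.m2] at h2
  omega

lemma TwoBlocks.mem_blk (_h : TwoBlocks n s t B₁ B₂) (x : ℕ) : x ∈ blk B₁ B₂ x := by
  unfold blk; split_ifs <;> simp_all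

lemma TwoBlocks.blk_eq (h : TwoBlocks n s t B₁ B₂) (x y : ℕ) (hxy : x ∈ blk B₁ B₂ y) :
    blk B₁ B₂ x = blk B₁ B₂ y := by
  have hd := Finset.disjoint_left.1 h.disj
  unfold blk at *
  split_ifs at hxy with c1 c2
  · simp [c1, hxy]
  · have : x ∉ B₁ := fun hx => hd hx hxy
    simp [c1, c2, this, hxy]
  · rw [Finset.mem_singleton] at hxy
    rw [hxy]

lemma TwoBlocks.blk_sub (h : TwoBlocks n s t B₁ B₂) (x y : ℕ) (hxy : x ∈ blk B₁ B₂ y)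
    (hy1 : 1 ≤ y) (hy2 : y ≤ 2 * n) : 1 ≤ x ∧ x ≤ 2 * n ∧ x % 2 = y % 2 := by
  have hs := h.hs
  have htn := h.htn
  unfold blk at *
  split_ifs at hxy with c1 c2
  · rw [h.m1] at c1 hxy; omega
  · rw [h.m2] at c2 hxy; omega
  · rw [Finset.mem_singleton] at hxy
    subst hxy; omega

lemma TwoBlocks.isPart (h : TwoBlocks n s t B₁ B₂) (G : Finset ℕ) (c : ℕ)
    (hG : ∀ x, x ∈ G ↔ 1 ≤ x ∧ x ≤ 2 * n ∧ x % 2 = c) :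
    IsPartitionOf G (G.image (blk B₁ B₂)) := by
  refine ⟨?_, ?_, ?_⟩
  · intro B hB
    obtain ⟨x, _, rfl⟩ := Finset.mem_image.1 hB
    exact ⟨x, h.mem_blk x⟩
  · intro B hB y hy
    obtain ⟨x, hx, rfl⟩ := Finset.mem_image.1 hB
    rw [hG] at *
    have := h.blk_sub y x hy hx.1 hx.2.1
    omega
  · intro x hx
    refine ⟨blk B₁ B₂ x, ⟨Finset.mem_image_of_mem _ hx, h.mem_blk x⟩, ?_⟩
    rintro B ⟨hB, hxB⟩
    obtain ⟨y, hy, rfl⟩ := Finset.mem_image.1 hB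
    exact (h.blk_eq x y hxB).symm

lemma TwoBlocks.nc (h : TwoBlocks n s t B₁ B₂) (P : Finset (Finset ℕ))
    (hP : ∀ B ∈ P, ∃ x, B = blk B₁ B₂ x) : NonCrossing P := by
  intro a b c d hab hbc hcd X hX Y hY ha hc hb hd
  obtain ⟨x, rfl⟩ := hP X hX
  obtain ⟨y, rfl⟩ := hP Y hY
  unfold blk at *
  split_ifs at * <;> first
    | rfl
    | (simp only [Finset.mem_singleton] at *; omega)
    | (rw [h.m1] at *; rw [h.m2] at *; omega)

lemma TwoBlocks.union_eq (h : TwoBlocks n s t B₁ B₂) :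
    (oddSet n).image (blk B₁ B₂) ∪ (evenSet n).image (blk B₁ B₂) =
      insert B₁ (insert B₂ ((Finset.Icc 1 (2 * n) \ (B₁ ∪ B₂)).image (fun x => ({x} : Finset ℕ)))) := by
  have hs := h.hs
  have htn := h.htn
  have hst := h.hst
  obtain ⟨y, hy⟩ := h.ne
  have hd := Finset.disjoint_left.1 h.disj
  rw [← Finset.image_union]
  have hu : oddSet n ∪ evenSet n = Finset.Icc 1 (2 * n) := by
    ext x
    rw [Finset.mem_union, mem_oddSet, mem_evenSet, Finset.mem_Icc]
    omega
  rw [hu]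
  ext B
  simp only [Finset.mem_image, Finset.mem_insert, Finset.mem_sdiff, Finset.mem_union, Finset.mem_Icc]
  constructor
  · rintro ⟨x, hx, rfl⟩
    unfold blk
    split_ifs with c1 c2
    · left; rfl
    · right; left; rfl
    · right; right; exact ⟨x, ⟨hx, by tauto⟩, rfl⟩
  · rintro (rfl | rfl | ⟨x, hx, rfl⟩)
    · exact ⟨s, by omega, by simp [blk, h.m1, hst]⟩
    · have hy' := (h.m2 y).1 hy
      have : y ∉ B₁ := fun hx => hd hx hy
      exact ⟨y, by omega, by simp [blk, this, hy]⟩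
    · exact ⟨x, hx.1, by simp only [blk]; rw [if_neg (by tauto), if_neg (by tauto)]⟩

lemma TwoBlocks.union_sub (h : TwoBlocks n s t B₁ B₂) : B₁ ∪ B₂ ⊆ Finset.Icc 1 (2 * n) := by
  intro x hx
  have hs := h.hs
  have htn := h.htn
  rw [Finset.mem_union, h.m1, h.m2] at hx
  rw [Finset.mem_Icc]; omega

lemma TwoBlocks.s_mem (h : TwoBlocks n s t B₁ B₂) : s ∈ B₁ := by
  rw [h.m1]; exact ⟨le_rfl, h.hst, rfl⟩

lemma TwoBlocks.isNCPair (h : TwoBlocks n s t B₁ B₂) :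
    IsNCPair n ((oddSet n).image (blk B₁ B₂)) ((evenSet n).image (blk B₁ B₂)) := by
  have hA : ∀ B ∈ (oddSet n).image (blk B₁ B₂), ∃ x, B = blk B₁ B₂ x := by
    intro B hB
    obtain ⟨x, _, rfl⟩ := Finset.mem_image.1 hB
    exact ⟨x, rfl⟩
  have hB : ∀ B ∈ (evenSet n).image (blk B₁ B₂), ∃ x, B = blk B₁ B₂ x := by
    intro B hB
    obtain ⟨x, _, rfl⟩ := Finset.mem_image.1 hB
    exact ⟨x, rfl⟩
  refine ⟨h.isPart _ 1 (mem_oddSet n), h.nc _ hA, h.isPart _ 0 (mem_evenSet n), h.nc _ hB,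
    h.nc _ ?_, ?_⟩
  · intro B hh
    rcases Finset.mem_union.1 hh with hh | hh
    · exact hA B hh
    · exact hB B hh
  · have hd := Finset.disjoint_left.1 h.disj
    rw [← Finset.card_union_of_disjoint, h.union_eq, Finset.card_insert_of_notMem,
      Finset.card_insert_of_notMem, Finset.card_image_of_injective, Finset.card_sdiff_of_subset h.union_sub,
      Finset.card_union_of_disjoint h.disj, h.card]
    · have := Finset.card_le_card h.union_sub
      rw [Finset.card_union_of_disjoint h.disj, h.card] at this
      simp at this ⊢
      omega
    · exact Finset.singleton_injective
    · intro hh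
      obtain ⟨x, hx, hx'⟩ := Finset.mem_image.1 hh
      simp only [Finset.mem_sdiff, Finset.mem_union] at hx
      exact hx.2 (Or.inr (hx' ▸ Finset.mem_singleton_self x))
    · intro hh
      rcases Finset.mem_insert.1 hh with hh | hh
      · exact hd h.s_mem (hh ▸ h.s_mem)
      obtain ⟨x, hx, hx'⟩ := Finset.mem_image.1 hh
      simp only [Finset.mem_sdiff, Finset.mem_union] at hx
      exact hx.2 (Or.inl (hx' ▸ Finset.mem_singleton_self x))
    · rw [Finset.disjoint_left]
      intro B h1 h2
      obtain ⟨x, hx, rfl⟩ := Finset.mem_image.1 h1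
      obtain ⟨y, hy, hxy⟩ := Finset.mem_image.1 h2
      have h3 := h.mem_blk x
      rw [← hxy] at h3
      rw [mem_oddSet] at hx
      rw [mem_evenSet] at hy
      have := h.blk_sub _ _ h3 hy.1 hy.2.1
      omega

lemma TwoBlocks.concVec_eq (h : TwoBlocks n s t B₁ B₂) :
    concVec n ((oddSet n).image (blk B₁ B₂)) ((evenSet n).image (blk B₁ B₂)) =
      ∑ b ∈ B₁, ∑ c ∈ B₂, finsetWedge n (n - 1) (B₁.erase b ∪ B₂.erase c) := by
  have hd := Finset.disjoint_left.1 h.disj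
  have hus := h.union_sub
  rw [← Finset.sum_product', concVec]
  symm
  refine Finset.sum_bij (fun p _ => B₁.erase p.1 ∪ B₂.erase p.2) ?_ ?_ ?_ ?_
  · rintro ⟨b, c⟩ hbc
    obtain ⟨hb, hc⟩ := Finset.mem_product.1 hbc
    simp only at hb hc
    simp only [Finset.mem_filter, Finset.mem_powersetCard]
    refine ⟨⟨?_, ?_⟩, ?_⟩
    · exact (Finset.union_subset_union (Finset.erase_subset _ _) (Finset.erase_subset _ _)).trans hus
    · rw [Finset.card_union_of_disjoint, Finset.card_erase_of_mem hb, Finset.card_erase_of_mem hc]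
      · have h1 := Finset.card_pos.2 ⟨b, hb⟩
        have h2 := Finset.card_pos.2 ⟨c, hc⟩
        have := h.card
        omega
      · exact Finset.disjoint_of_subset_left (Finset.erase_subset _ _)
          (Finset.disjoint_of_subset_right (Finset.erase_subset _ _) h.disj)
    · intro B hB
      rw [h.union_eq, Finset.mem_insert, Finset.mem_insert] at hB
      rw [Finset.card_eq_one]
      rcases hB with rfl | rfl | hB
      · refine ⟨b, ?_⟩
        ext x
        simp only [Finset.mem_sdiff, Finset.mem_union, Finset.mem_erase, Finset.mem_singleton]
        have := @hd x
        constructor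
        · tauto
        · rintro rfl; tauto
      · refine ⟨c, ?_⟩
        ext x
        simp only [Finset.mem_sdiff, Finset.mem_union, Finset.mem_erase, Finset.mem_singleton]
        have := @hd x
        constructor
        · tauto
        · rintro rfl; tauto
      · obtain ⟨x, hx, rfl⟩ := Finset.mem_image.1 hB
        refine ⟨x, ?_⟩
        simp only [Finset.mem_sdiff, Finset.mem_union] at hx
        rw [Finset.sdiff_eq_self_iff_disjoint, Finset.disjoint_singleton_left]
        simp only [Finset.mem_union, Finset.mem_erase]
        tauto
  · rintro ⟨b, c⟩ h1 ⟨b', c'⟩ h2 heq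
    obtain ⟨hb, hc⟩ := Finset.mem_product.1 h1
    obtain ⟨hb', hc'⟩ := Finset.mem_product.1 h2
    simp only at hb hc hb' hc' heq
    have d1 : b ∉ B₁.erase b' ∪ B₂.erase c' := by
      rw [← heq, Finset.mem_union]
      rintro (hh | hh)
      · exact Finset.notMem_erase _ _ hh
      · exact hd hb (Finset.mem_of_mem_erase hh)
    have d2 : c ∉ B₁.erase b' ∪ B₂.erase c' := by
      rw [← heq, Finset.mem_union]
      rintro (hh | hh)
      · exact hd (Finset.mem_of_mem_erase hh) hc
      · exact Finset.notMem_erase _ _ hh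
    have e1 : b = b' := by
      by_contra hne
      exact d1 (Finset.mem_union_left _ (Finset.mem_erase.2 ⟨hne, hb⟩))
    have e2 : c = c' := by
      by_contra hne
      exact d2 (Finset.mem_union_right _ (Finset.mem_erase.2 ⟨hne, hc⟩))
    rw [e1, e2]
  · intro I hI
    simp only [Finset.mem_filter, Finset.mem_powersetCard] at hI
    obtain ⟨⟨hI1, _⟩, hI3⟩ := hI
    unfold ConcordantWith at hI3
    rw [h.union_eq] at hI3
    obtain ⟨b, hb⟩ := Finset.card_eq_one.1 (hI3 B₁ (by simp))
    obtain ⟨c, hc⟩ := Finset.card_eq_one.1 (hI3 B₂ (by simp))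
    have hb' : ∀ x, (x ∈ B₁ ∧ x ∉ I) ↔ x = b := by
      intro x; rw [← Finset.mem_sdiff, hb, Finset.mem_singleton]
    have hc' : ∀ x, (x ∈ B₂ ∧ x ∉ I) ↔ x = c := by
      intro x; rw [← Finset.mem_sdiff, hc, Finset.mem_singleton]
    refine ⟨(b, c), Finset.mem_product.2 ⟨((hb' b).2 rfl).1, ((hc' c).2 rfl).1⟩, ?_⟩
    ext x
    simp only [Finset.mem_union, Finset.mem_erase]
    have e1 := hb' x
    have e2 := hc' x
    constructor
    · tauto
    · intro hx
      by_cases hxB : x ∈ B₁ ∪ B₂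
      · rw [Finset.mem_union] at hxB
        tauto
      · exfalso
        have := hI3 {x} (by
          rw [Finset.mem_insert, Finset.mem_insert]
          right; right
          exact Finset.mem_image.2 ⟨x, Finset.mem_sdiff.2 ⟨hI1 hx, hxB⟩, rfl⟩)
        have hz : ({x} : Finset ℕ) \ I = ∅ := by
          rw [Finset.sdiff_eq_empty_iff_subset]; simpa using hx
        rw [hz] at this
        simp at this
  · intro p _
    rfl
end TB

/-- The degree one generator of the exterior algebra. -/
def genE (n i : ℕ) : ExteriorAlgebra ℝ (Fin (2 * n) → ℝ) := ExteriorAlgebra.ι ℝ (stdE n i)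

/-- Ordered product over a finite set. -/
def eprod (n : ℕ) (I : Finset ℕ) : ExteriorAlgebra ℝ (Fin (2 * n) → ℝ) :=
  ((I.sort (· ≤ ·)).map (genE n)).prod

/-- Product of the first `k` vectors of a sequence. -/
def seqProd (n : ℕ) (X : ℕ → Fin (2 * n) → ℝ) (k : ℕ) : ExteriorAlgebra ℝ (Fin (2 * n) → ℝ) :=
  ((List.range k).map (fun i => ExteriorAlgebra.ι ℝ (X i))).prod

/-- Arithmetic progression with difference two. -/
def prog (s m : ℕ) : Finset ℕ := (Finset.range m).image (fun i => s + 2 * i)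

/-- Product of consecutive basis vectors. -/
def chain (n s m : ℕ) : ExteriorAlgebra ℝ (Fin (2 * n) → ℝ) :=
  seqProd n (fun i => vVec n (s + 2 * i)) m

lemma genE_sq (n i : ℕ) : genE n i * genE n i = 0 := ExteriorAlgebra.ι_sq_zero _

lemma genE_anti (n i j : ℕ) : genE n i * genE n j = - (genE n j * genE n i) :=
  eq_neg_of_add_eq_zero_left (ExteriorAlgebra.ι_add_mul_swap _ _)

lemma finsetWedge_eq (n k : ℕ) (I : Finset ℕ) (h : I.card = k) :
    finsetWedge n k I = eprod n I := by
  rw [finsetWedge, ExteriorAlgebra.ιMulti_apply, eprod]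
  congr 1
  apply List.ext_getElem
  · simp [h]
  · intro i h1 h2
    simp only [List.length_map] at h2
    simp [genE, List.getElem?_eq_getElem h2]

lemma ιMulti_eq_seqProd (n k : ℕ) (X : ℕ → Fin (2 * n) → ℝ) :
    ExteriorAlgebra.ιMulti ℝ k (fun p : Fin k => X p.val) = seqProd n X k := by
  rw [ExteriorAlgebra.ιMulti_apply, seqProd]
  congr 1
  apply List.ext_getElem <;> simp

lemma seqProd_add (n : ℕ) (X : ℕ → Fin (2 * n) → ℝ) (a b : ℕ) :
    seqProd n X (a + b) = seqProd n X a * seqProd n (fun i => X (a + i)) b := by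
  simp [seqProd, List.range_add, Function.comp_def]

lemma seqProd_congr (n : ℕ) (X Y : ℕ → Fin (2 * n) → ℝ) (a : ℕ) (h : ∀ i < a, X i = Y i) :
    seqProd n X a = seqProd n Y a := by
  unfold seqProd
  congr 1
  apply List.map_congr_left
  intro i hi
  rw [h i (List.mem_range.1 hi)]

lemma seqProd_one (n : ℕ) (X : ℕ → Fin (2 * n) → ℝ) :
    seqProd n X 1 = ExteriorAlgebra.ι ℝ (X 0) := by
  simp [seqProd, List.range_succ]

lemma eprod_union (n : ℕ) (I J : Finset ℕ) (h : ∀ a ∈ I, ∀ b ∈ J, a < b) :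
    eprod n (I ∪ J) = eprod n I * eprod n J := by
  have : (I ∪ J).sort (· ≤ ·) = I.sort (· ≤ ·) ++ J.sort (· ≤ ·) := by
    have hnd : (I.sort (· ≤ ·) ++ J.sort (· ≤ ·)).Nodup := by
      rw [List.nodup_append]
      refine ⟨Finset.sort_nodup _ _, Finset.sort_nodup _ _, ?_⟩
      intro a ha b hb
      exact (h a ((Finset.mem_sort _).1 ha) b ((Finset.mem_sort _).1 hb)).ne
    have hp : (I.sort (· ≤ ·) ++ J.sort (· ≤ ·)).Pairwise (· ≤ ·) := by
      rw [List.pairwise_append]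
      refine ⟨Finset.pairwise_sort _ _, Finset.pairwise_sort _ _, ?_⟩
      intro a ha b hb
      exact (h a ((Finset.mem_sort _).1 ha) b ((Finset.mem_sort _).1 hb)).le
    have := (List.toFinset_sort (· ≤ ·) hnd).2 hp
    rw [List.toFinset_append, Finset.sort_toFinset, Finset.sort_toFinset] at this
    exact this
  rw [eprod, this, List.map_append, List.prod_append]; rfl

lemma eprod_singleton (n i : ℕ) : eprod n {i} = genE n i := by
  simp [eprod]

lemma eprod_empty (n : ℕ) : eprod n ∅ = 1 := by
  simp [eprod]

lemma mem_prog (s m x : ℕ) : x ∈ prog s m ↔ s ≤ x ∧ x < s + 2 * m ∧ x % 2 = s % 2 := by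
  simp only [prog, Finset.mem_image, Finset.mem_range]
  constructor
  · rintro ⟨i, hi, rfl⟩; omega
  · intro h; exact ⟨(x - s) / 2, by omega, by omega⟩

lemma card_prog (s m : ℕ) : (prog s m).card = m := by
  rw [prog, Finset.card_image_of_injective, Finset.card_range]
  intro a b h
  simp only at h
  omega

lemma prog_succ (s m : ℕ) : prog s (m + 1) = prog s m ∪ {s + 2 * m} := by
  ext x
  rw [Finset.mem_union, mem_prog, mem_prog, Finset.mem_singleton]
  omega

lemma eprod_prog_succ (n s m : ℕ) :
    eprod n (prog s (m + 1)) = eprod n (prog s m) * genE n (s + 2 * m) := by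
  rw [prog_succ, eprod_union, eprod_singleton]
  intro a ha b hb
  rw [mem_prog] at ha
  rw [Finset.mem_singleton] at hb
  omega

lemma prog_zero (s : ℕ) : prog s 0 = ∅ := by simp [prog]

lemma chain_zero (n s : ℕ) : chain n s 0 = 1 := by simp [chain, seqProd]

lemma chain_succ (n s m : ℕ) :
    chain n s (m + 1) = chain n s m * (genE n (s + 2 * m) + genE n (s + 2 * (m + 1))) := by
  rw [chain, seqProd_add, seqProd_one]
  simp [vVec, genE, chain, mul_add, add_assoc]

lemma chain_mul_last (n s m : ℕ) :
    chain n s m * genE n (s + 2 * m) = eprod n (prog s (m + 1)) := by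
  induction m with
  | zero => simp [chain_zero, eprod_prog_succ, prog_zero, eprod_empty]
  | succ m ih =>
    rw [chain_succ, mul_add, add_mul, mul_assoc _ (genE n (s + 2 * (m + 1))), genE_sq, mul_zero,
      add_zero, ih, ← eprod_prog_succ]

lemma first_mul_chain (n s m : ℕ) :
    genE n s * chain n s m = eprod n (prog s (m + 1)) := by
  induction m with
  | zero => simp [chain_zero, eprod_prog_succ, prog_zero, eprod_empty]
  | succ m ih =>
    rw [chain_succ, ← mul_assoc, ih, mul_add, ← eprod_prog_succ, eprod_prog_succ, mul_assoc,
      genE_sq, mul_zero, zero_add]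

lemma sum_erase_prog (n s m : ℕ) :
    ∑ b ∈ prog s (m + 1), eprod n ((prog s (m + 1)).erase b) = chain n s m := by
  induction m with
  | zero => simp [prog_succ, prog_zero, chain_zero, eprod_empty]
  | succ m ih =>
    have hd : Disjoint (prog s (m + 1)) {s + 2 * (m + 1)} := by
      rw [Finset.disjoint_singleton_right, mem_prog]; omega
    rw [prog_succ s (m + 1), Finset.sum_union hd, Finset.sum_singleton, chain_succ, mul_add (chain n s m),
      chain_mul_last, ← ih, Finset.sum_mul, add_comm]
    congr 1
    · congr 1
      ext x
      simp only [Finset.mem_erase, Finset.mem_union, Finset.mem_singleton, mem_prog]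
      omega
    · apply Finset.sum_congr rfl
      intro b hb
      rw [mem_prog] at hb
      rw [← eprod_singleton, ← eprod_union]
      · congr 1
        ext x
        simp only [Finset.mem_erase, Finset.mem_union, Finset.mem_singleton, mem_prog]
        omega
      · intro x hx y hy
        simp only [Finset.mem_erase, Finset.mem_singleton, mem_prog] at hx hy
        omega

lemma twoBlocksA (n a : ℕ) (ha : 1 ≤ a) (han : a ≤ n) :
    TwoBlocks n 1 (2 * a - 1) (prog 1 a) (prog (2 * a) (n - a + 1)) where
  hs := le_rfl
  hst := by omega
  htn := by omega
  par := by omega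
  m1 x := by rw [mem_prog]; omega
  m2 x := by rw [mem_prog]; omega
  ne := ⟨2 * a, by rw [mem_prog]; omega⟩
  card := by rw [card_prog, card_prog]; omega

lemma twoBlocksG (n m e : ℕ) (hm : 1 ≤ m) (hmn : m + 2 ≤ n) (he : e ≤ 1) :
    TwoBlocks n (2 * m + e) (2 * m + 2 + e) (prog (2 * m + e) 2)
      (prog (1 + e) m ∪ prog (2 * m + 3 + e) (n - m - 1)) where
  hs := by omega
  hst := by omega
  htn := by omega
  par := by omega
  m1 x := by rw [mem_prog]; omega
  m2 x := by rw [Finset.mem_union, mem_prog, mem_prog]; omega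
  ne := ⟨1 + e, by rw [Finset.mem_union, mem_prog, mem_prog]; omega⟩
  card := by
    rw [Finset.card_union_of_disjoint, card_prog, card_prog, card_prog]
    · omega
    · rw [Finset.disjoint_left]
      intro x
      rw [mem_prog, mem_prog]
      omega

lemma TwoBlocks.card_erase {n s t : ℕ} {B₁ B₂ : Finset ℕ} (h : TwoBlocks n s t B₁ B₂)
    (b c : ℕ) (hb : b ∈ B₁) (hc : c ∈ B₂) : (B₁.erase b ∪ B₂.erase c).card = n - 1 := by
  rw [Finset.card_union_of_disjoint, Finset.card_erase_of_mem hb, Finset.card_erase_of_mem hc]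
  · have h1 := Finset.card_pos.2 ⟨b, hb⟩
    have h2 := Finset.card_pos.2 ⟨c, hc⟩
    have := h.card
    omega
  · exact Finset.disjoint_of_subset_left (Finset.erase_subset _ _)
      (Finset.disjoint_of_subset_right (Finset.erase_subset _ _) h.disj)

lemma concA (n a : ℕ) (ha : 1 ≤ a) (han : a ≤ n) :
    ∑ b ∈ prog 1 a, ∑ c ∈ prog (2 * a) (n - a + 1),
      finsetWedge n (n - 1) ((prog 1 a).erase b ∪ (prog (2 * a) (n - a + 1)).erase c) =
    chain n 1 (a - 1) * chain n (2 * a) (n - a) := by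
  rw [← sum_erase_prog, ← sum_erase_prog, Finset.sum_mul_sum]
  rw [show a - 1 + 1 = a by omega]
  apply Finset.sum_congr rfl
  intro b hb
  apply Finset.sum_congr rfl
  intro c hc
  rw [finsetWedge_eq _ _ _ ((twoBlocksA n a ha han).card_erase b c hb hc), eprod_union]
  intro x hx y hy
  simp only [Finset.mem_erase, mem_prog] at hx hy
  omega

lemma concG (n m e : ℕ) (hm : 1 ≤ m) (hmn : m + 2 ≤ n) (he : e ≤ 1) :
    ∑ b ∈ prog (2 * m + e) 2, ∑ c ∈ prog (1 + e) m ∪ prog (2 * m + 3 + e) (n - m - 1),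
      finsetWedge n (n - 1) ((prog (2 * m + e) 2).erase b ∪
        (prog (1 + e) m ∪ prog (2 * m + 3 + e) (n - m - 1)).erase c) =
    chain n (1 + e) (m - 1) * (genE n (2 * m - 1 + e) - genE n (2 * m + 3 + e)) *
      ExteriorAlgebra.ι ℝ (vVec n (2 * m + e)) * chain n (2 * m + 3 + e) (n - m - 2) := by
  have hd : Disjoint (prog (1 + e) m) (prog (2 * m + 3 + e) (n - m - 1)) := by
    rw [Finset.disjoint_left]
    intro x
    rw [mem_prog, mem_prog]
    omega
  have h1 : ∑ b ∈ prog (2 * m + e) 2, ∑ c ∈ prog (1 + e) m,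
      finsetWedge n (n - 1) ((prog (2 * m + e) 2).erase b ∪
        (prog (1 + e) m ∪ prog (2 * m + 3 + e) (n - m - 1)).erase c) =
      chain n (1 + e) (m - 1) * chain n (2 * m + e) 1 *
        eprod n (prog (2 * m + 3 + e) (n - m - 1)) := by
    rw [← sum_erase_prog, ← sum_erase_prog, Finset.sum_mul_sum, Finset.sum_mul, Finset.sum_comm]
    rw [show m - 1 + 1 = m by omega]
    apply Finset.sum_congr rfl
    intro c hc
    rw [Finset.sum_mul]
    apply Finset.sum_congr rfl
    intro b hb
    rw [finsetWedge_eq _ _ _ ((twoBlocksG n m e hm hmn he).card_erase b c hb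
      (Finset.mem_union_left _ hc)), ← eprod_union, ← eprod_union]
    · congr 1
      ext x
      rw [mem_prog] at hc
      simp only [Finset.mem_erase, Finset.mem_union, mem_prog]
      omega
    all_goals
      intro x hx y hy
      simp only [Finset.mem_erase, Finset.mem_union, mem_prog] at hx hy
      omega
  have h2 : ∑ b ∈ prog (2 * m + e) 2, ∑ c ∈ prog (2 * m + 3 + e) (n - m - 1),
      finsetWedge n (n - 1) ((prog (2 * m + e) 2).erase b ∪
        (prog (1 + e) m ∪ prog (2 * m + 3 + e) (n - m - 1)).erase c) =
      eprod n (prog (1 + e) m) * chain n (2 * m + e) 1 *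
        chain n (2 * m + 3 + e) (n - m - 2) := by
    rw [← sum_erase_prog, ← sum_erase_prog, mul_assoc, Finset.sum_mul_sum, Finset.mul_sum]
    rw [show n - m - 2 + 1 = n - m - 1 by omega]
    apply Finset.sum_congr rfl
    intro b hb
    rw [Finset.mul_sum]
    apply Finset.sum_congr rfl
    intro c hc
    rw [finsetWedge_eq _ _ _ ((twoBlocksG n m e hm hmn he).card_erase b c hb
      (Finset.mem_union_right _ hc)), ← eprod_union, ← eprod_union]
    · congr 1
      ext x
      rw [mem_prog] at hc
      simp only [Finset.mem_erase, Finset.mem_union, mem_prog]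
      omega
    all_goals
      intro x hx y hy
      simp only [Finset.mem_erase, Finset.mem_union, mem_prog] at hx hy
      omega
  simp only [Finset.sum_union hd, Finset.sum_add_distrib]
  rw [h1, h2]
  have e1 := chain_mul_last n (1 + e) (m - 1)
  have e2 := first_mul_chain n (2 * m + 3 + e) (n - m - 2)
  rw [show m - 1 + 1 = m by omega, show 1 + e + 2 * (m - 1) = 2 * m - 1 + e by omega] at e1
  rw [show n - m - 2 + 1 = n - m - 1 by omega] at e2
  rw [← e1, ← e2]
  have e3 : chain n (2 * m + e) 1 = ExteriorAlgebra.ι ℝ (vVec n (2 * m + e)) := by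
    rw [chain, seqProd_one]; simp
  have e4 : ExteriorAlgebra.ι ℝ (vVec n (2 * m + e)) * genE n (2 * m + 3 + e) =
      - (genE n (2 * m + 3 + e) * ExteriorAlgebra.ι ℝ (vVec n (2 * m + e))) :=
    eq_neg_of_add_eq_zero_left (ExteriorAlgebra.ι_add_mul_swap _ _)
  rw [e3, ← mul_assoc, mul_assoc (chain n (1 + e) (m - 1)) _ (genE n (2 * m + 3 + e)), e4]
  noncomm_ring

lemma altsum (n c i : ℕ) (hc : c = 1 ∨ c = 2) (hi : 1 ≤ i) (hin : i + 2 ≤ 2 * n) :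
    ∑ k : Fin n, (-1 : ℝ) ^ (k.val + 1) *
      ((if 2 * k.val + c = i then 1 else 0) + (if 2 * k.val + c = i + 2 then 1 else 0)) = 0 := by
  simp only [mul_add, Finset.sum_add_distrib]
  by_cases hp : i % 2 = c % 2
  · rw [Finset.sum_eq_single (⟨(i - c) / 2, by omega⟩ : Fin n),
      Finset.sum_eq_single (⟨(i - c) / 2 + 1, by omega⟩ : Fin n)]
    · simp only
      rw [if_pos (by omega), if_pos (by omega), pow_succ _ ((i - c) / 2 + 1)]
      ring
    · intro b _ hb
      rw [if_neg, mul_zero]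
      intro h
      apply hb
      apply Fin.ext
      simp only
      omega
    · simp
    · intro b _ hb
      rw [if_neg, mul_zero]
      intro h
      apply hb
      apply Fin.ext
      simp only
      omega
    · simp
  · rw [Finset.sum_eq_zero, Finset.sum_eq_zero, add_zero]
    · intro x _
      rw [if_neg (by omega), mul_zero]
    · intro x _
      rw [if_neg (by omega), mul_zero]

lemma vVec_mem (n i : ℕ) (hi : 1 ≤ i) (hin : i + 2 ≤ 2 * n) : vVec n i ∈ Vsub n := by
  rw [Vsub, Submodule.mem_inf, LinearMap.mem_ker, LinearMap.mem_ker]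
  constructor
  · have := altsum n 2 i (Or.inr rfl) hi hin
    simpa [vVec, stdE, add_assoc] using this
  · have := altsum n 1 i (Or.inl rfl) hi hin
    simpa [vVec, stdE, add_assoc] using this

/-- The vectors `v_k` as elements of the subspace. -/
def vV (n k : ℕ) : ↥(Vsub n) :=
  if h : 1 ≤ k ∧ k + 2 ≤ 2 * n then ⟨vVec n k, vVec_mem n k h.1 h.2⟩ else 0

lemma vV_coe (n k : ℕ) (h1 : 1 ≤ k) (h2 : k + 2 ≤ 2 * n) :
    (vV n k : Fin (2 * n) → ℝ) = vVec n k := by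
  rw [vV, dif_pos ⟨h1, h2⟩]

/-- Coefficients of dual functionals. -/
def dualc (k j : ℕ) : ℝ := if j ≤ k ∧ j % 2 = k % 2 then (-1) ^ ((k - j) / 2) else 0

/-- Dual functionals. -/
def dualF (n k : ℕ) : (Fin (2 * n) → ℝ) →ₗ[ℝ] ℝ :=
  ∑ t : Fin (2 * n), dualc k (t.val + 1) • LinearMap.proj t

lemma dualF_stdE (n k j : ℕ) (hj : 1 ≤ j) (hjn : j ≤ 2 * n) :
    dualF n k (stdE n j) = dualc k j := by
  have : dualF n k (stdE n j) =
      ∑ t : Fin (2 * n), dualc k (t.val + 1) * (if t.val + 1 = j then 1 else 0) := by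
    simp [dualF, stdE]
  rw [this, Finset.sum_eq_single (⟨j - 1, by omega⟩ : Fin (2 * n))]
  · simp only
    rw [if_pos (by omega), mul_one, show j - 1 + 1 = j by omega]
  · intro b _ hb
    rw [if_neg, mul_zero]
    intro h
    apply hb
    apply Fin.ext
    simp only
    omega
  · simp

lemma dualF_vVec (n k j : ℕ) (hj : 1 ≤ j) (hjn : j + 2 ≤ 2 * n) :
    dualF n k (vVec n j) = if k = j then 1 else 0 := by
  rw [vVec, map_add, dualF_stdE n k j hj (by omega), dualF_stdE n k (j + 2) (by omega) hjn]
  unfold dualc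
  split_ifs with h1 h2 h3 h4 h5 h6
  any_goals omega
  · rw [show (k - j) / 2 = (k - (j + 2)) / 2 + 1 by omega, pow_succ]; ring
  · subst h4; simp
  · simp

lemma dualF_vV (n k j : ℕ) (hj : 1 ≤ j) (hjn : j + 2 ≤ 2 * n) :
    dualF n k (vV n j : Fin (2 * n) → ℝ) = if k = j then 1 else 0 := by
  rw [vV_coe n j hj hjn, dualF_vVec n k j hj hjn]

lemma extract_form' (K k : ℕ) (hK : K = k + 2) {M : Type*} [AddCommGroup M] [Module ℝ M]
    (ω : M →ₗ[ℝ] M →ₗ[ℝ] ℝ) (x : Fin K → M) (f : Fin K → Module.Dual ℝ M)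
    (h₁ : ∀ i, f i (x i) = 1) (h₀ : ∀ i j, i ≠ j → f i (x j) = 0)
    (h : ∑ p : Fin K, ∑ q : Fin K,
          (if p < q then
            ((-1 : ℝ) ^ (p.val + q.val + 1) * ω (x p) (x q)) •
              wedgeIn k (fun r : Fin k =>
                (((List.ofFn x).eraseIdx q.val).eraseIdx p.val).getD r.val 0)
          else 0) = 0) (p q : Fin K) (hpq : p < q) : ω (x p) (x q) = 0 := by
  subst hK
  exact extract_form k ω x f h₁ h₀ h p q hpq

/-- The vanishing property of the form on a family of vectors. -/
lemma isotropic (n : ℕ) (hn : 3 ≤ n)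
    (ω : ↥(Vsub n) →ₗ[ℝ] ↥(Vsub n) →ₗ[ℝ] ℝ)
    (Q : ↥(⋀[ℝ]^(n - 1) ↥(Vsub n)) →ₗ[ℝ] ↥(⋀[ℝ]^(n - 3) ↥(Vsub n)))
    (hQ : ∀ x : Fin (n - 1) → ↥(Vsub n),
      Q (wedgeIn (n - 1) x) =
        ∑ p : Fin (n - 1), ∑ q : Fin (n - 1),
          if p < q then
            ((-1 : ℝ) ^ (p.val + q.val + 1) * ω (x p) (x q)) •
              wedgeIn (n - 3) (fun r : Fin (n - 3) =>
                (((List.ofFn x).eraseIdx q.val).eraseIdx p.val).getD r.val 0)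
          else 0)
    (hker : HV n ≤ LinearMap.ker Q) {s t : ℕ} {B₁ B₂ : Finset ℕ} (hB : TwoBlocks n s t B₁ B₂)
    (X : ℕ → ↥(Vsub n))
    (hX : seqProd n (fun i => (X i : Fin (2 * n) → ℝ)) (n - 1) =
      ∑ b ∈ B₁, ∑ c ∈ B₂, finsetWedge n (n - 1) (B₁.erase b ∪ B₂.erase c))
    (g : ℕ → ℕ)
    (hg : ∀ p q, p < n - 1 → q < n - 1 →
      dualF n (g p) (X q : Fin (2 * n) → ℝ) = if p = q then 1 else 0)
    (p q : ℕ) (hpq : p < q) (hq : q < n - 1) : ω (X p) (X q) = 0 := by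
  have hmem : wedgeIn (n - 1) (fun p : Fin (n - 1) => X p.val) ∈ HV n := by
    apply Submodule.subset_span
    refine ⟨_, _, hB.isNCPair, ?_⟩
    rw [hB.concVec_eq, ← hX, ← ιMulti_eq_seqProd]
    change ExteriorAlgebra.map _ (ExteriorAlgebra.ιMulti ℝ (n - 1) _) = _
    rw [ExteriorAlgebra.map_apply_ιMulti]
    rfl
  have h0 := hker hmem
  rw [LinearMap.mem_ker, hQ] at h0
  exact extract_form' (n - 1) (n - 3) (by omega) ω (fun p : Fin (n - 1) => X p.val)
    (fun p => (dualF n (g p.val)).comp (Vsub n).subtype)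
    (fun i => by simp [hg i.val i.val i.isLt i.isLt])
    (fun i j hij => by
      have : i.val ≠ j.val := fun h => hij (Fin.ext h)
      simp [hg i.val j.val i.isLt j.isLt, this])
    h0 ⟨p, by omega⟩ ⟨q, hq⟩ hpq

/-- The index sequence of the first family. -/
def idxA (a p : ℕ) : ℕ := if p + 1 < a then 2 * p + 1 else 2 * p + 2

/-- The vector sequence of the second family. -/
def seqG (n m e p : ℕ) : ↥(Vsub n) :=
  if p + 1 = m then vV n (2 * m - 1 + e) - vV n (2 * m + 1 + e)
  else if p = m then vV n (2 * m + e) else vV n (2 * p + 1 + e)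

/-- The index sequence of the second family. -/
def idxG (m e p : ℕ) : ℕ := if p = m then 2 * m + e else 2 * p + 1 + e

lemma seqProdA (n a : ℕ) (ha : 1 ≤ a) (han : a ≤ n) :
    seqProd n (fun i => (vV n (idxA a i) : Fin (2 * n) → ℝ)) (n - 1) =
      chain n 1 (a - 1) * chain n (2 * a) (n - a) := by
  rw [show n - 1 = (a - 1) + (n - a) by omega, seqProd_add]
  congr 1
  · apply seqProd_congr
    intro i hi
    simp only [idxA]
    rw [if_pos (by omega), vV_coe _ _ (by omega) (by omega), add_comm]
  · apply seqProd_congr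
    intro i hi
    simp only [idxA]
    rw [if_neg (by omega), vV_coe _ _ (by omega) (by omega)]
    congr 1
    omega

lemma seqProdG (n m e : ℕ) (hm : 1 ≤ m) (hmn : m + 2 ≤ n) (he : e ≤ 1) :
    seqProd n (fun i => (seqG n m e i : Fin (2 * n) → ℝ)) (n - 1) =
    chain n (1 + e) (m - 1) * (genE n (2 * m - 1 + e) - genE n (2 * m + 3 + e)) *
      ExteriorAlgebra.ι ℝ (vVec n (2 * m + e)) * chain n (2 * m + 3 + e) (n - m - 2) := by
  rw [show n - 1 = (m - 1) + 1 + 1 + (n - m - 2) by omega, seqProd_add, seqProd_add, seqProd_add,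
    seqProd_one, seqProd_one]
  congr 1
  · congr 1
    · congr 1
      · apply seqProd_congr
        intro i hi
        simp only [seqG]
        rw [if_neg (by omega), if_neg (by omega), vV_coe _ _ (by omega) (by omega)]
        congr 1
        omega
      · simp only [seqG]
        rw [if_pos (by omega), genE, genE, ← map_sub, Submodule.coe_sub,
          vV_coe _ _ (by omega) (by omega), vV_coe _ _ (by omega) (by omega), vVec, vVec,
          show 2 * m - 1 + e + 2 = 2 * m + 1 + e by omega,
          show 2 * m + 1 + e + 2 = 2 * m + 3 + e by omega]
        congr 1
        abel
    · simp only [seqG]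
      rw [if_neg (by omega), if_pos (by omega), vV_coe _ _ (by omega) (by omega)]
  · apply seqProd_congr
    intro i hi
    simp only [seqG]
    rw [if_neg (by omega), if_neg (by omega), vV_coe _ _ (by omega) (by omega)]
    congr 1
    omega

theorem form_determined_by_concordance (n : ℕ) (hn : 3 ≤ n)
    (ω : ↥(Vsub n) →ₗ[ℝ] ↥(Vsub n) →ₗ[ℝ] ℝ)
    (hskew : ∀ x y, ω x y = - ω y x)
    (Q : ↥(⋀[ℝ]^(n - 1) ↥(Vsub n)) →ₗ[ℝ] ↥(⋀[ℝ]^(n - 3) ↥(Vsub n)))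
    (hQ : ∀ x : Fin (n - 1) → ↥(Vsub n),
      Q (wedgeIn (n - 1) x) =
        ∑ p : Fin (n - 1), ∑ q : Fin (n - 1),
          if p < q then
            ((-1 : ℝ) ^ (p.val + q.val + 1) * ω (x p) (x q)) •
              wedgeIn (n - 3) (fun r : Fin (n - 3) =>
                (((List.ofFn x).eraseIdx q.val).eraseIdx p.val).getD r.val 0)
          else 0)
    (hker : HV n ≤ LinearMap.ker Q) :
    ∃ a : ℝ,
      (∀ i : ℕ, 1 ≤ i → i ≤ 2 * n - 3 → ∀ x y : ↥(Vsub n),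
        (x : Fin (2 * n) → ℝ) = vVec n i → (y : Fin (2 * n) → ℝ) = vVec n (i + 1) →
        ω x y = (-1 : ℝ) ^ i * a) ∧
      (∀ i j : ℕ, 1 ≤ i → i ≤ 2 * n - 2 → j ≤ 2 * n - 2 → i + 1 < j →
        ∀ x y : ↥(Vsub n),
        (x : Fin (2 * n) → ℝ) = vVec n i → (y : Fin (2 * n) → ℝ) = vVec n j →
        ω x y = 0) := by
  have isoA := fun (a : ℕ) (ha : 1 ≤ a) (han : a ≤ n) =>
    isotropic n hn ω Q hQ hker (twoBlocksA n a ha han) (fun i => vV n (idxA a i))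
      ((seqProdA n a ha han).trans (concA n a ha han).symm) (idxA a)
      (by
        intro p q hp hq
        rw [dualF_vV]
        · congr 1
          unfold idxA
          apply propext
          split_ifs <;> omega
        · unfold idxA; split_ifs <;> omega
        · unfold idxA; split_ifs <;> omega)
  have isoG := fun (m e : ℕ) (hm : 1 ≤ m) (hmn : m + 2 ≤ n) (he : e ≤ 1) =>
    isotropic n hn ω Q hQ hker (twoBlocksG n m e hm hmn he) (seqG n m e)
      ((seqProdG n m e hm hmn he).trans (concG n m e hm hmn he).symm) (idxG m e)
      (by
        intro p q hp hq
        unfold seqG idxG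
        split_ifs <;>
        first
          | omega
          | (rw [Submodule.coe_sub, map_sub, dualF_vV _ _ _ (by omega) (by omega),
              dualF_vV _ _ _ (by omega) (by omega)]
             split_ifs <;> first | omega | simp)
          | (rw [dualF_vV _ _ _ (by omega) (by omega)]
             split_ifs <;> first | omega | simp))
  have far : ∀ i j : ℕ, 1 ≤ i → j + 2 ≤ 2 * n → i + 1 < j → ω (vV n i) (vV n j) = 0 := by
    intro i j hi hj hij
    by_cases hio : i % 2 = 1
    · by_cases hjo : j % 2 = 1
      · have := isoA n (by omega) le_rfl (i / 2) (j / 2) (by omega) (by omega)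
        simp only [idxA] at this
        rwa [if_pos (by omega), if_pos (by omega), show 2 * (i / 2) + 1 = i by omega,
          show 2 * (j / 2) + 1 = j by omega] at this
      · have := isoA (i / 2 + 2) (by omega) (by omega) (i / 2) (j / 2 - 1) (by omega) (by omega)
        simp only [idxA] at this
        rwa [if_pos (by omega), if_neg (by omega), show 2 * (i / 2) + 1 = i by omega,
          show 2 * (j / 2 - 1) + 2 = j by omega] at this
    · by_cases hjo : j % 2 = 1
      · have := isoG (i / 2) 0 (by omega) (by omega) (by omega) (i / 2) (j / 2) (by omega) (by omega)
        simp only [seqG] at this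
        rwa [if_neg (by omega), if_pos trivial, if_neg (by omega), if_neg (by omega),
          show 2 * (i / 2) + 0 = i by omega,
          show 2 * (j / 2) + 1 + 0 = j by omega] at this
      · have := isoA 1 le_rfl (by omega) (i / 2 - 1) (j / 2 - 1) (by omega) (by omega)
        simp only [idxA] at this
        rwa [if_neg (by omega), if_neg (by omega), show 2 * (i / 2 - 1) + 2 = i by omega,
          show 2 * (j / 2 - 1) + 2 = j by omega] at this
  have step : ∀ i : ℕ, 1 ≤ i → i + 4 ≤ 2 * n →
      ω (vV n (i + 1)) (vV n (i + 2)) = - ω (vV n i) (vV n (i + 1)) := by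
    intro i hi hin
    have := isoG ((i + 1) / 2) ((i + 1) % 2) (by omega) (by omega) (by omega)
      ((i + 1) / 2 - 1) ((i + 1) / 2) (by omega) (by omega)
    simp only [seqG] at this
    rw [if_pos (by omega), if_neg (by omega), if_pos trivial,
      show 2 * ((i + 1) / 2) - 1 + (i + 1) % 2 = i by omega,
      show 2 * ((i + 1) / 2) + 1 + (i + 1) % 2 = i + 2 by omega,
      show 2 * ((i + 1) / 2) + (i + 1) % 2 = i + 1 by omega,
      map_sub, LinearMap.sub_apply] at this
    rw [hskew (vV n (i + 1)) (vV n (i + 2))]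
    linarith
  have near : ∀ i : ℕ, i + 4 ≤ 2 * n →
      ω (vV n (i + 1)) (vV n (i + 2)) = (-1 : ℝ) ^ (i + 1) * (- ω (vV n 1) (vV n 2)) := by
    intro i
    induction i with
    | zero => intro _; simp
    | succ i ih =>
      intro h
      rw [step (i + 1) (by omega) (by omega), ih (by omega), pow_succ _ (i + 1)]
      ring
  refine ⟨- ω (vV n 1) (vV n 2), ?_, ?_⟩
  · intro i hi hin x y hx hy
    have ex : x = vV n i := Subtype.ext (by rw [hx, vV_coe _ _ hi (by omega)])
    have ey : y = vV n (i + 1) := Subtype.ext (by rw [hy, vV_coe _ _ (by omega) (by omega)])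
    obtain ⟨j, rfl⟩ : ∃ j, i = j + 1 := ⟨i - 1, by omega⟩
    rw [ex, ey]
    exact near j (by omega)
  · intro i j hi hi2 hj hij x y hx hy
    have ex : x = vV n i := Subtype.ext (by rw [hx, vV_coe _ _ hi (by omega)])
    have ey : y = vV n j := Subtype.ext (by rw [hy, vV_coe _ _ (by omega) (by omega)])
    rw [ex, ey]
    exact far i j hi (by omega) hij
end

section
/- (Correctness of the algorithm expressing concordance vectors as pure wedge products.) Let σ be a non-crossing partition of {1̄,…,n̄} with dual σ̃ and merged partition (σ|σ̃). For each block B = {j_1 < j_2 < … < j_k} of (σ|σ̃) with k ≥ 2 and each 1 ≤ l ≤ k−1, form the pair (j_l, j_{l+1}). Then: (i) there are exactly n−1 such pairs in total and their first coordinates are pairwise distinct; (ii) listing these pairs as (a_1,b_1),…,(a_{n−1},b_{n−1}) with a_1 < a_2 < … < a_{n−1}, and setting ε_r := (−1)^{m_r} where m_r is the number of integers t with a_r < t < b_r and t ≡ a_r (mod 2), one has w_σ = (e_{a_1} + ε_1 e_{b_1}) ∧ (e_{a_2} + ε_2 e_{b_2}) ∧ … ∧ (e_{a_{n−1}} + ε_{n−1}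 e_{b_{n−1}}) in ⋀^{n-1}ℝ^{2n}. -/
open scoped Classical

noncomputable section

/-- The consecutive pairs `(j_l, j_{l+1})` of a block, in increasing order. -/
def blockPairs (B : Finset ℕ) : Finset (ℕ × ℕ) :=
  ((B.sort (· ≤ ·)).zip (B.sort (· ≤ ·)).tail).toFinset

/-- All consecutive pairs of all blocks of a collection of blocks. -/
def pairsOf (P : Finset (Finset ℕ)) : Finset (ℕ × ℕ) := P.sup blockPairs

end

/-- Number of arcs `(a r, b r)` contained in `[L, R]`. -/
def arcCnt {k : ℕ} (a b : Fin k → ℕ) (L R : ℕ) : ℕ :=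
  (Finset.univ.filter fun r => L ≤ a r ∧ b r ≤ R).card

/-- Abstract non-crossing arc systems. -/
structure ArcSys {k : ℕ} (a b : Fin k → ℕ) : Prop where
  mono : StrictMono a
  inj : Function.Injective b
  lt : ∀ r, a r < b r
  par : ∀ r, a r % 2 = b r % 2
  nc : ∀ q r, a q < a r → a r < b q → b r ≤ b q

theorem arcCnt_skip {k : ℕ} {a b : Fin k → ℕ} {L R : ℕ}
    (h : ∀ r, a r = L → R < b r) : arcCnt a b L R = arcCnt a b (L + 1) R := by
  unfold arcCnt
  congr 1
  ext r
  have := h r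
  simp only [Finset.mem_filter, Finset.mem_univ, true_and]
  omega

theorem arcCnt_split {k : ℕ} {a b : Fin k → ℕ} (S : ArcSys a b) {L R : ℕ} (q : Fin k)
    (hL : a q = L) (hR : b q ≤ R) :
    arcCnt a b L R = 1 + arcCnt a b (L + 1) (b q - 1) + arcCnt a b (b q) R := by
  unfold arcCnt
  have hd2 : Disjoint ({q} : Finset (Fin k)) (Finset.univ.filter fun r => L + 1 ≤ a r ∧ b r ≤ b q - 1) := by
    simp [Finset.disjoint_singleton_left]; omega
  have hd1 : Disjoint (({q} : Finset (Fin k)) ∪ (Finset.univ.filter fun r => L + 1 ≤ a r ∧ b r ≤ b q - 1))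
      (Finset.univ.filter fun r => b q ≤ a r ∧ b r ≤ R) := by
    rw [Finset.disjoint_left]
    intro r hr hr'
    have h1 := S.lt r
    have h2 := S.lt q
    simp only [Finset.mem_union, Finset.mem_singleton, Finset.mem_filter, Finset.mem_univ, true_and] at hr hr'
    rcases hr with rfl | hr
    · omega
    · omega
  have : (1 : ℕ) = ({q} : Finset (Fin k)).card := by simp
  nth_rewrite 1 [this]
  rw [← Finset.card_union_of_disjoint hd2, ← Finset.card_union_of_disjoint hd1]
  congr 1
  ext r
  simp only [Finset.mem_union, Finset.mem_singleton, Finset.mem_filter, Finset.mem_univ, true_and]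
  have h1 := S.lt r
  have h2 := S.lt q
  by_cases hq : r = q
  · subst hq; simp; omega
  · have h3 : a r ≠ a q := fun h => hq (S.mono.injective h)
    have h4 : b r ≠ b q := fun h => hq (S.inj h)
    have h5 := S.nc q r
    simp only [hq, false_or]
    omega

theorem arcCnt_le {k : ℕ} {a b : Fin k → ℕ} (S : ArcSys a b) (N : ℕ) :
    ∀ L R : ℕ, R ≤ L + N → 2 * arcCnt a b L R ≤ R - L := by
  induction N using Nat.strong_induction_on with
  | _ N ih =>
    intro L R hN
    by_cases hRL : R ≤ L
    · have : arcCnt a b L R = 0 := by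
        unfold arcCnt
        rw [Finset.card_eq_zero, Finset.filter_eq_empty_iff]
        intro r _ h
        have := S.lt r
        omega
      omega
    by_cases h : ∃ q, a q = L ∧ b q ≤ R
    · obtain ⟨q, hq, hqR⟩ := h
      have h1 := S.lt q
      have h2 := S.par q
      rw [arcCnt_split S q hq hqR]
      have e1 := ih (N - 1) (by omega) (L + 1) (b q - 1) (by omega)
      have e2 := ih (N - 1) (by omega) (b q) R (by omega)
      omega
    · push Not at h
      rw [arcCnt_skip h]
      have := ih (N - 1) (by omega) (L + 1) R (by omega)
      omega

theorem arcCnt_le' {k : ℕ} {a b : Fin k → ℕ} (S : ArcSys a b) (r : Fin k) (N : ℕ) :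
    ∀ L R : ℕ, R ≤ L + N → L ≤ a r → b r ≤ R →
      2 * arcCnt a b L R + (b r - a r) ≤ (R - L) + 2 + 2 * arcCnt a b (a r + 1) (b r - 1) := by
  induction N using Nat.strong_induction_on with
  | _ N ih =>
    intro L R hN hL hR
    have h0 := S.lt r
    by_cases h : ∃ q, a q = L ∧ b q ≤ R
    · obtain ⟨q, hq, hqR⟩ := h
      have h1 := S.lt q
      have h2 := S.par q
      rw [arcCnt_split S q hq hqR]
      have e1 := arcCnt_le S N (L + 1) (b q - 1) (by omega)
      have e2 := arcCnt_le S N (b q) R (by omega)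
      by_cases hqr : q = r
      · subst hqr
        rw [← hq]
        omega
      have h3 : a r ≠ a q := fun h => hqr (S.mono.injective h).symm
      have h4 : b r ≠ b q := fun h => hqr (S.inj h).symm
      have h5 := S.nc q r
      by_cases hc : a r < b q
      · have e3 := ih (N - 1) (by omega) (L + 1) (b q - 1) (by omega) (by omega) (by omega)
        omega
      · have e3 := ih (N - 1) (by omega) (b q) R (by omega) (by omega) (by omega)
        omega
    · push Not at h
      rw [arcCnt_skip h]
      have := h r
      have := ih (N - 1) (by omega) (L + 1) R (by omega) (by omega) (by omega)
      omega

theorem arcCnt_eq {n : ℕ} {a b : Fin (n - 1) → ℕ} (hn : 2 ≤ n) (S : ArcSys a b)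
    (h1 : ∀ r, 1 ≤ a r) (h2 : ∀ r, b r ≤ 2 * n) (r : Fin (n - 1)) :
    2 * arcCnt a b (a r + 1) (b r - 1) + 2 = b r - a r := by
  have e0 : arcCnt a b 1 (2 * n) = n - 1 := by
    unfold arcCnt
    rw [Finset.filter_true_of_mem (fun r _ => ⟨h1 r, h2 r⟩)]
    simp
  have e1 := arcCnt_le' S r (2 * n) 1 (2 * n) (by omega) (h1 r) (h2 r)
  have e2 := arcCnt_le S (b r) (a r + 1) (b r - 1) (by omega)
  have h3 := S.lt r
  have h4 := S.par r
  omega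

theorem same_par_card {x y : ℕ} (hxy : x < y) (hp : x % 2 = y % 2) :
    2 * ((Finset.Ioo x y).filter (fun t => t % 2 = x % 2)).card + 2 = y - x := by
  have : (Finset.Ioo x y).filter (fun t => t % 2 = x % 2)
      = (Finset.range ((y - x) / 2 - 1)).image (fun i => x + 2 + 2 * i) := by
    ext t
    simp only [Finset.mem_filter, Finset.mem_Ioo, Finset.mem_image, Finset.mem_range]
    constructor
    · rintro ⟨⟨h1, h2⟩, h3⟩
      exact ⟨(t - x) / 2 - 1, by omega, by omega⟩
    · rintro ⟨i, hi, rfl⟩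
      omega
  rw [this, Finset.card_image_of_injective _ (fun i j h => by simpa using h), Finset.card_range]
  omega

/-- Inversion sign of a sequence. -/
def invSign {k : ℕ} (c : Fin k → ℕ) : ℝ :=
  ∏ i, ∏ j, if i < j ∧ c j < c i then (-1 : ℝ) else 1

theorem invSign_mono {k : ℕ} {c : Fin k → ℕ} (hc : StrictMono c) : invSign c = 1 := by
  unfold invSign
  refine Finset.prod_eq_one fun i _ => Finset.prod_eq_one fun j _ => ?_
  rw [if_neg]
  rintro ⟨h1, h2⟩
  exact absurd (hc h1) (by omega)

theorem wedge_sort {n k : ℕ} (c : Fin k → ℕ) (hc : Function.Injective c) :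
    ExteriorAlgebra.ιMulti ℝ k (fun r => stdE n (c r)) =
      invSign c • finsetWedge n k (Finset.univ.image c) := by
  have hcard : (Finset.univ.image c).card = k := by
    rw [Finset.card_image_of_injective _ hc]; simp
  set I := Finset.univ.image c with hI
  set o := I.orderEmbOfFin hcard with ho
  have hex : ∀ i, ∃ j, o j = c i := by
    intro i
    have : c i ∈ Set.range o := by
      rw [ho, Finset.range_orderEmbOfFin]; simp [hI]
    exact this
  choose p hp using hex
  have hpi : Function.Injective p := fun i j hij => hc (by rw [← hp, ← hp, hij])
  set π : Equiv.Perm (Fin k) := Equiv.ofBijective p (Finite.injective_iff_bijective.mp hpi) with hπ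
  have hπp : ∀ i, o (π i) = c i := fun i => hp i
  have hw : finsetWedge n k I = ExteriorAlgebra.ιMulti ℝ k (fun r => stdE n (o r)) := by
    unfold finsetWedge
    congr 1
    ext r : 1
    rw [ho, Finset.orderEmbOfFin_apply, List.getD_eq_getElem]
    rfl
  rw [hw]
  have : (fun r => stdE n (c r)) = (fun r => stdE n (o r)) ∘ π := by
    ext r : 1
    simp [hπp]
  rw [this, AlternatingMap.map_perm, Units.smul_def, ← Int.cast_smul_eq_zsmul ℝ]
  congr 1
  rw [Equiv.Perm.sign_eq_prod_prod_Ioi]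
  unfold invSign
  push_cast
  refine Finset.prod_congr rfl fun i _ => ?_
  rw [← Finset.prod_subset (Finset.subset_univ (Finset.Ioi i))]
  · refine Finset.prod_congr rfl fun j hj => ?_
    rw [Finset.mem_Ioi] at hj
    rw [← hπp, ← hπp]
    simp only [hj, true_and, o.lt_iff_lt]
    have : π i ≠ π j := fun h => hj.ne (π.injective h)
    by_cases h : π i < π j
    · simp [h, not_lt.mpr h.le]
    · simp [h, lt_of_le_of_ne (not_lt.mp h) this.symm]
  · intro j _ hj
    rw [Finset.mem_Ioi] at hj
    simp [hj]

theorem invSign_change {k : ℕ} {c c' : Fin k → ℕ} (r : Fin k) (hcc : ∀ q, q ≠ r → c q = c' q)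
    (hlt : c' r < c r) (hc : Function.Injective c) (hc' : Function.Injective c') :
    invSign c = (-1) ^ (Finset.univ.filter fun q => c' r < c q ∧ c q < c r).card * invSign c' := by
  let t : (Fin k → ℕ) → Fin k → Fin k → ℝ := fun c i j => if i < j ∧ c j < c i then (-1 : ℝ) else 1
  let u : Fin k → Fin k → ℝ := fun i j => t c i j * t c' i j
  have hsq : ∀ c i j, t c i j * t c i j = 1 := by
    intro c i j; simp only [t]; split_ifs <;> norm_num
  have hinv : ∀ c : Fin k → ℕ, invSign c * invSign c = 1 := by
    intro c
    show (∏ i, ∏ j, t c i j) * (∏ i, ∏ j, t c i j) = 1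
    rw [← Finset.prod_mul_distrib]
    refine Finset.prod_eq_one fun i _ => ?_
    rw [← Finset.prod_mul_distrib]
    exact Finset.prod_eq_one fun j _ => hsq _ _ _
  have key : invSign c * invSign c' = (-1) ^ (Finset.univ.filter fun q => c' r < c q ∧ c q < c r).card := by
    have e1 : invSign c * invSign c' = ∏ i, ∏ j, u i j := by
      show (∏ i, ∏ j, t c i j) * (∏ i, ∏ j, t c' i j) = _
      simp only [u, Finset.prod_mul_distrib]
    have hne : ∀ i j, i ≠ r → j ≠ r → u i j = 1 := by
      intro i j hi hj
      have : t c' i j = t c i j := by simp only [t, hcc i hi, hcc j hj]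
      simp only [u, this, hsq]
    have hrr : u r r = 1 := by simp [u, t]
    have e2 : ∀ i, i ≠ r → ∏ j, u i j = u i r := by
      intro i hi
      exact Finset.prod_eq_single r (fun j _ hj => hne i j hi hj) (by simp)
    rw [e1, ← Finset.mul_prod_erase _ _ (Finset.mem_univ r),
      Finset.prod_congr rfl (fun i hi => e2 i (Finset.ne_of_mem_erase hi)),
      ← Finset.mul_prod_erase _ (fun j => u r j) (Finset.mem_univ r), hrr, one_mul,
      ← Finset.prod_mul_distrib, ← Finset.prod_const, Finset.prod_filter,
      ← Finset.mul_prod_erase _ _ (Finset.mem_univ r), if_neg (by simp), one_mul]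
    refine Finset.prod_congr rfl fun q hq => ?_
    have hqr := Finset.ne_of_mem_erase hq
    have h1 : c q ≠ c r := fun h => hqr (hc h)
    have h2 : c' q ≠ c' r := fun h => hqr (hc' h)
    rw [← hcc q hqr] at h2
    simp only [u, t, ← hcc q hqr]
    rcases lt_or_gt_of_ne hqr with h | h
    · have h' := h.not_gt
      simp only [h, h', true_and, false_and, if_false]
      split_ifs <;> first | omega | norm_num
    · have h' := h.not_gt
      simp only [h, h', true_and, false_and, if_false]
      split_ifs <;> first | omega | norm_num
  calc invSign c = invSign c * (invSign c' * invSign c') := by rw [hinv, mul_one]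
    _ = _ := by rw [← mul_assoc, key]

/-- Choose `a r` on `s` and `b r` off `s`. -/
def pick {k : ℕ} (a b : Fin k → ℕ) (s : Finset (Fin k)) (r : Fin k) : ℕ :=
  if r ∈ s then a r else b r

theorem pick_count {k : ℕ} {a b : Fin k → ℕ} (S : ArcSys a b) (s : Finset (Fin k)) (r : Fin k) :
    (Finset.univ.filter fun q => a r < pick a b s q ∧ pick a b s q < b r).card
      = arcCnt a b (a r + 1) (b r - 1) := by
  unfold arcCnt
  congr 1
  ext q
  simp only [Finset.mem_filter, Finset.mem_univ, true_and]
  unfold pick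
  have h1 := S.lt r
  have h2 := S.lt q
  by_cases hqr : q = r
  · subst hqr
    split_ifs <;> omega
  have h3 : a r ≠ a q := fun h => hqr (S.mono.injective h).symm
  have h4 : b r ≠ b q := fun h => hqr (S.inj h).symm
  have h5 := S.nc q r
  have h6 := S.nc r q
  split_ifs <;> omega

theorem pick_sign {k : ℕ} {a b : Fin k → ℕ} (S : ArcSys a b) (ε : Fin k → ℝ)
    (hε : ∀ r, ε r = (-1) ^ arcCnt a b (a r + 1) (b r - 1)) (N : ℕ) :
    ∀ s : Finset (Fin k), sᶜ.card = N → Function.Injective (pick a b s) →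
      (∏ r, if r ∈ s then 1 else ε r) * invSign (pick a b s) = 1 := by
  induction N with
  | zero =>
    intro s hs _
    have hs' : s = Finset.univ := by
      rwa [Finset.card_eq_zero, Finset.compl_eq_empty_iff] at hs
    subst hs'
    have : pick a b Finset.univ = a := by ext r; simp [pick]
    rw [this, invSign_mono S.mono]
    simp
  | succ N ih =>
    intro s hs hinj
    have hne : sᶜ.Nonempty := by rw [← Finset.card_pos]; omega
    set r := sᶜ.min' hne with hr
    have hrs : r ∉ s := by
      have := Finset.min'_mem _ hne
      rwa [← hr, Finset.mem_compl] at this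
    have hmin : ∀ q, q ∉ s → r ≤ q := fun q hq => Finset.min'_le _ _ (by simpa using hq)
    set s' := insert r s with hs'
    have hpr : pick a b s r = b r := by simp [pick, hrs]
    have hpr' : pick a b s' r = a r := by simp [pick, hs']
    have hpq : ∀ q, q ≠ r → pick a b s q = pick a b s' q := by
      intro q hq
      simp [pick, hs', hq]
    have hnot : ∀ q, q ≠ r → pick a b s q ≠ a r := by
      intro q hq h
      unfold pick at h
      split_ifs at h with hqs
      · exact hq (S.mono.injective h)
      · have h1 := hmin q hqs
        have h2 := S.mono.monotone h1
        have h3 := S.lt q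
        omega
    have hinj' : Function.Injective (pick a b s') := by
      intro p q hpq'
      by_cases hp : p = r
      · by_cases hq : q = r
        · rw [hp, hq]
        · rw [hp, hpr', ← hpq q hq] at hpq'
          exact absurd hpq'.symm (hnot q hq)
      · by_cases hq : q = r
        · rw [hq, hpr', ← hpq p hp] at hpq'
          exact absurd hpq' (hnot p hp)
        · rw [← hpq p hp, ← hpq q hq] at hpq'
          exact hinj hpq'
    have hcard : s'ᶜ.card = N := by
      rw [hs', Finset.compl_insert, Finset.card_erase_of_mem (by simpa using hrs), hs]
      omega
    have hI := ih s' hcard hinj'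
    have hch := invSign_change r hpq (by rw [hpr, hpr']; exact S.lt r) hinj hinj'
    rw [hpr, hpr', pick_count S s r, ← hε] at hch
    have hε2 : ε r * ε r = 1 := by
      rw [hε, ← mul_pow]; simp
    have hprod : (∏ q, if q ∈ s then 1 else ε q) = ε r * ∏ q, if q ∈ s' then 1 else ε q := by
      rw [← Finset.mul_prod_erase _ _ (Finset.mem_univ r),
        ← Finset.mul_prod_erase Finset.univ (fun q => if q ∈ s' then 1 else ε q) (Finset.mem_univ r),
        if_neg hrs, if_pos (by simp [hs']), one_mul]
      congr 1
      refine Finset.prod_congr rfl fun q hq => ?_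
      have := Finset.ne_of_mem_erase hq
      simp [hs', this]
    rw [hch, hprod]
    linear_combination (ε r * ε r) * hI + hε2

theorem pick_image_inj {k : ℕ} {a b : Fin k → ℕ} (S : ArcSys a b) {s t : Finset (Fin k)}
    (hs : Function.Injective (pick a b s)) (ht : Function.Injective (pick a b t))
    (h : Finset.univ.image (pick a b s) = Finset.univ.image (pick a b t)) : s = t := by
  have key : ∀ s t : Finset (Fin k), Function.Injective (pick a b s) →
      Finset.univ.image (pick a b s) = Finset.univ.image (pick a b t) →
      ∀ r, (∀ q, q < r → (q ∈ s ↔ q ∈ t)) → r ∈ s → r ∈ t := by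
    intro s t hs h r hlt hrs
    by_contra hrt
    have hm : a r ∈ Finset.univ.image (pick a b t) := by
      rw [← h, Finset.mem_image]
      exact ⟨r, Finset.mem_univ _, by simp [pick, hrs]⟩
    obtain ⟨q, -, hq⟩ := Finset.mem_image.mp hm
    unfold pick at hq
    split_ifs at hq with hqt
    · have := S.mono.injective hq
      subst this
      exact hrt hqt
    · have h1 := S.lt q
      have h2 : q < r := S.mono.lt_iff_lt.mp (by omega)
      have h3 : q ∉ s := fun hqs => hqt ((hlt q h2).mp hqs)
      have : pick a b s q = pick a b s r := by simp [pick, h3, hrs, hq]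
      exact h2.ne (hs this)
  ext r
  induction r using WellFoundedLT.induction with
  | _ r ih =>
    exact ⟨key s t hs h r ih, key t s ht h.symm r (fun q hq => (ih q hq).symm)⟩

theorem wedge_expand {n k : ℕ} {a b : Fin k → ℕ} (S : ArcSys a b) (ε : Fin k → ℝ)
    (hε : ∀ r, ε r = (-1) ^ arcCnt a b (a r + 1) (b r - 1)) :
    ExteriorAlgebra.ιMulti ℝ k (fun r => stdE n (a r) + ε r • stdE n (b r)) =
      ∑ s ∈ (Finset.univ : Finset (Finset (Fin k))).filter
        (fun s => Function.Injective (pick a b s)),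
        finsetWedge n k (Finset.univ.image (pick a b s)) := by
  have e0 : (fun r => stdE n (a r) + ε r • stdE n (b r))
    = (fun r => stdE n (a r)) + (fun r => ε r • stdE n (b r)) := rfl
  rw [e0, ← AlternatingMap.coe_multilinearMap, MultilinearMap.map_add_univ, Finset.sum_filter]
  refine Finset.sum_congr rfl fun s _ => ?_
  have e1 : s.piecewise (fun r => stdE n (a r)) (fun r => ε r • stdE n (b r))
      = fun r => (if r ∈ s then 1 else ε r) • stdE n (pick a b s r) := by
    ext r : 1
    by_cases h : r ∈ s <;> simp [Finset.piecewise, pick, h]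
  rw [e1, MultilinearMap.map_smul_univ, AlternatingMap.coe_multilinearMap]
  split_ifs with hinj
  · rw [wedge_sort _ hinj, smul_smul, pick_sign S ε hε _ s rfl hinj, one_smul]
  · rw [AlternatingMap.map_eq_zero_of_not_injective, smul_zero]
    intro h
    exact hinj (fun x y hxy => h (by simp only [hxy]))

theorem mem_zip_tail {l : List ℕ} (hl : l.Pairwise (· < ·)) (x y : ℕ) :
    (x, y) ∈ l.zip l.tail ↔ x ∈ l ∧ y ∈ l ∧ x < y ∧ ∀ z ∈ l, z ≤ x ∨ y ≤ z := by
  induction l with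
  | nil => simp
  | cons u l ih =>
    cases l with
    | nil => simp; omega
    | cons v l =>
      have hl' := hl.of_cons
      have ih' := ih hl'
      have hu : ∀ z ∈ v :: l, u < z := (List.pairwise_cons.mp hl).1
      have hv : ∀ z ∈ l, v < z := (List.pairwise_cons.mp hl').1
      have huv := hu v (by simp)
      have hz : (x, y) ∈ (u :: v :: l).zip (u :: v :: l).tail ↔
          (x = u ∧ y = v) ∨ (x, y) ∈ (v :: l).zip (v :: l).tail := by
        simp
      rw [hz, ih']
      constructor
      · rintro (⟨rfl, rfl⟩ | ⟨h1, h2, h3, h4⟩)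
        · refine ⟨by simp, by simp, huv, ?_⟩
          intro z hz
          simp only [List.mem_cons] at hz
          rcases hz with rfl | rfl | hz
          · simp
          · simp
          · exact Or.inr (hv z hz).le
        · refine ⟨List.mem_cons_of_mem _ h1, List.mem_cons_of_mem _ h2, h3, ?_⟩
          intro z hz
          rcases List.mem_cons.mp hz with rfl | hz
          · exact Or.inl (hu x h1).le
          · exact h4 z hz
      · rintro ⟨h1, h2, h3, h4⟩
        rcases List.mem_cons.mp h2 with rfl | h2'
        · rcases List.mem_cons.mp h1 with rfl | h1'
          · omega
          · have := hu x h1'; omega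
        rcases List.mem_cons.mp h1 with rfl | h1'
        · left
          refine ⟨rfl, ?_⟩
          rcases List.mem_cons.mp h2' with rfl | h2''
          · rfl
          · have e1 := hv y h2''
            have e2 := h4 v (by simp)
            omega
        · right
          exact ⟨h1', h2', h3, fun z hz => h4 z (List.mem_cons_of_mem _ hz)⟩

theorem mem_blockPairs (B : Finset ℕ) (x y : ℕ) :
    (x, y) ∈ blockPairs B ↔ x ∈ B ∧ y ∈ B ∧ x < y ∧ ∀ z ∈ B, z ≤ x ∨ y ≤ z := by
  unfold blockPairs
  rw [List.mem_toFinset, mem_zip_tail (Finset.sortedLT_sort B).pairwise]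
  simp

theorem card_blockPairs (B : Finset ℕ) (hB : B.Nonempty) : (blockPairs B).card + 1 = B.card := by
  have himg : (blockPairs B).image Prod.fst = B.erase (B.max' hB) := by
    ext x
    simp only [Finset.mem_image, Finset.mem_erase, Prod.exists, exists_and_right, exists_eq_right]
    constructor
    · rintro ⟨y, hy⟩
      rw [mem_blockPairs] at hy
      obtain ⟨h1, h2, h3, h4⟩ := hy
      have := B.le_max' y h2
      exact ⟨by omega, h1⟩
    · rintro ⟨h1, h2⟩
      have hlt : x < B.max' hB := lt_of_le_of_ne (B.le_max' x h2) h1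
      have hne : (B.filter (x < ·)).Nonempty := ⟨B.max' hB, by simp [hlt, B.max'_mem hB]⟩
      have hm := Finset.min'_mem _ hne
      rw [Finset.mem_filter] at hm
      refine ⟨(B.filter (x < ·)).min' hne, ?_⟩
      rw [mem_blockPairs]
      refine ⟨h2, hm.1, hm.2, ?_⟩
      intro z hz
      by_cases hzx : z ≤ x
      · exact Or.inl hzx
      · exact Or.inr (Finset.min'_le _ _ (by simp [hz]; omega))
  have hinj : Set.InjOn Prod.fst (blockPairs B : Set (ℕ × ℕ)) := by
    rintro ⟨x, y⟩ hp ⟨x', y'⟩ hq hxx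
    simp only [Finset.mem_coe] at hp hq hxx
    subst hxx
    rw [mem_blockPairs] at hp hq
    have e1 := hp.2.2.2 y' hq.2.1
    have e2 := hq.2.2.2 y hp.2.1
    have := hp.2.2.1
    have := hq.2.2.1
    have : y = y' := by omega
    rw [this]
  rw [← Finset.card_image_of_injOn hinj, himg, Finset.card_erase_add_one (B.max'_mem hB)]

theorem mem_pairsOf (P : Finset (Finset ℕ)) (p : ℕ × ℕ) :
    p ∈ pairsOf P ↔ ∃ B ∈ P, p ∈ blockPairs B := by
  unfold pairsOf
  rw [Finset.mem_sup]

/-- Merged partition facts. -/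
structure Merged (n : ℕ) (P : Finset (Finset ℕ)) : Prop where
  ne : ∀ B ∈ P, B.Nonempty
  sub : ∀ B ∈ P, B ⊆ Finset.Icc 1 (2 * n)
  uniq : ∀ B ∈ P, ∀ C ∈ P, ∀ x, x ∈ B → x ∈ C → B = C
  cov : ∀ x ∈ Finset.Icc 1 (2 * n), ∃ B ∈ P, x ∈ B
  par : ∀ B ∈ P, ∀ x ∈ B, ∀ y ∈ B, x % 2 = y % 2
  nc : NonCrossing P
  card : P.card = n + 1

theorem merged_of_pair {n : ℕ} {σ σd : Finset (Finset ℕ)} (h : IsNCPair n σ σd) :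
    Merged n (σ ∪ σd) := by
  obtain ⟨⟨s1, s2, s3⟩, -, ⟨d1, d2, d3⟩, -, hnc, hcard⟩ := h
  have hodd : ∀ x, x ∈ oddSet n ↔ x % 2 = 1 ∧ x ≤ 2 * n := by
    intro x
    simp only [oddSet, Finset.mem_image, Finset.mem_range]
    constructor
    · rintro ⟨k, hk, rfl⟩; omega
    · intro hx; exact ⟨x / 2, by omega, by omega⟩
  have heven : ∀ x, x ∈ evenSet n ↔ x % 2 = 0 ∧ 1 ≤ x ∧ x ≤ 2 * n := by
    intro x
    simp only [evenSet, Finset.mem_image, Finset.mem_range]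
    constructor
    · rintro ⟨k, hk, rfl⟩; omega
    · intro hx; exact ⟨x / 2 - 1, by omega, by omega⟩
  have so : ∀ B ∈ σ, ∀ x ∈ B, x % 2 = 1 ∧ x ≤ 2 * n := fun B hB x hx => (hodd x).mp (s2 B hB hx)
  have de : ∀ B ∈ σd, ∀ x ∈ B, x % 2 = 0 ∧ 1 ≤ x ∧ x ≤ 2 * n :=
    fun B hB x hx => (heven x).mp (d2 B hB hx)
  refine ⟨?_, ?_, ?_, ?_, ?_, hnc, ?_⟩
  · intro B hB
    rcases Finset.mem_union.mp hB with hB | hB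
    · exact s1 B hB
    · exact d1 B hB
  · intro B hB x hx
    rw [Finset.mem_Icc]
    rcases Finset.mem_union.mp hB with hB | hB
    · have := so B hB x hx; omega
    · have := de B hB x hx; omega
  · intro B hB C hC x hxB hxC
    rcases Finset.mem_union.mp hB with hB | hB <;> rcases Finset.mem_union.mp hC with hC | hC
    · exact (s3 x (s2 B hB hxB)).unique ⟨hB, hxB⟩ ⟨hC, hxC⟩
    · have := so B hB x hxB; have := de C hC x hxC; omega
    · have := so C hC x hxC; have := de B hB x hxB; omega
    · exact (d3 x (d2 B hB hxB)).unique ⟨hB, hxB⟩ ⟨hC, hxC⟩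
  · intro x hx
    rw [Finset.mem_Icc] at hx
    by_cases hp : x % 2 = 1
    · obtain ⟨B, hB, -⟩ := s3 x ((hodd x).mpr (by omega))
      exact ⟨B, Finset.mem_union_left _ hB.1, hB.2⟩
    · obtain ⟨B, hB, -⟩ := d3 x ((heven x).mpr (by omega))
      exact ⟨B, Finset.mem_union_right _ hB.1, hB.2⟩
  · intro B hB x hx y hy
    rcases Finset.mem_union.mp hB with hB | hB
    · rw [(so B hB x hx).1, (so B hB y hy).1]
    · rw [(de B hB x hx).1, (de B hB y hy).1]
  · rw [Finset.card_union_of_disjoint, hcard]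
    rw [Finset.disjoint_left]
    intro B hB hB'
    obtain ⟨x, hx⟩ := s1 B hB
    have := so B hB x hx; have := de B hB' x hx; omega

theorem merged_card {n : ℕ} {P : Finset (Finset ℕ)} (M : Merged n P) :
    (pairsOf P).card = n - 1 := by
  have e : pairsOf P = P.biUnion blockPairs := by
    ext p; rw [mem_pairsOf, Finset.mem_biUnion]
  have hd : (P : Set (Finset ℕ)).PairwiseDisjoint blockPairs := by
    intro B hB C hC hBC
    rw [Function.onFun, Finset.disjoint_left]
    rintro ⟨x, y⟩ h1 h2
    rw [mem_blockPairs] at h1 h2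
    exact hBC (M.uniq B hB C hC x h1.1 h2.1)
  rw [e, Finset.card_biUnion hd]
  have hd2 : (P : Set (Finset ℕ)).PairwiseDisjoint id := by
    intro B hB C hC hBC
    rw [Function.onFun, Finset.disjoint_left]
    intro x h1 h2
    exact hBC (M.uniq B hB C hC x h1 h2)
  have hU : P.biUnion id = Finset.Icc 1 (2 * n) := by
    ext x
    rw [Finset.mem_biUnion]
    constructor
    · rintro ⟨B, hB, hx⟩; exact M.sub B hB hx
    · exact M.cov x
  have h1 : ∑ B ∈ P, B.card = 2 * n := by
    have := Finset.card_biUnion hd2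
    rw [hU] at this
    simpa using this.symm
  have h2 : ∑ B ∈ P, ((blockPairs B).card + 1) = 2 * n := by
    rw [← h1]
    exact Finset.sum_congr rfl fun B hB => card_blockPairs B (M.ne B hB)
  rw [Finset.sum_add_distrib, Finset.sum_const, M.card, smul_eq_mul, mul_one] at h2
  omega

theorem merged_fst {n : ℕ} {P : Finset (Finset ℕ)} (M : Merged n P) {x y x' y' : ℕ}
    (h : (x, y) ∈ pairsOf P) (h' : (x', y') ∈ pairsOf P) (he : x = x') : y = y' := by
  subst he
  rw [mem_pairsOf] at h h'
  obtain ⟨B, hB, h⟩ := h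
  obtain ⟨C, hC, h'⟩ := h'
  rw [mem_blockPairs] at h h'
  obtain rfl := M.uniq B hB C hC x h.1 h'.1
  have e1 := h.2.2.2 y' h'.2.1
  have e2 := h'.2.2.2 y h.2.1
  have := h.2.2.1
  have := h'.2.2.1
  omega

theorem merged_arcSys {n : ℕ} {P : Finset (Finset ℕ)} (M : Merged n P) {k : ℕ} {a b : Fin k → ℕ}
    (ha : StrictMono a) (hab : ∀ r, (a r, b r) ∈ pairsOf P) : ArcSys a b := by
  have hB : ∀ r, ∃ B ∈ P, a r ∈ B ∧ b r ∈ B ∧ a r < b r ∧ ∀ z ∈ B, z ≤ a r ∨ b r ≤ z := by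
    intro r
    obtain ⟨B, hB, h⟩ := (mem_pairsOf _ _).mp (hab r)
    exact ⟨B, hB, (mem_blockPairs _ _ _).mp h⟩
  refine ⟨ha, ?_, ?_, ?_, ?_⟩
  · intro q r hqr
    obtain ⟨B, hB1, h1, h2, h3, h4⟩ := hB q
    obtain ⟨C, hC1, g1, g2, g3, g4⟩ := hB r
    obtain rfl := M.uniq B hB1 C hC1 (b q) h2 (hqr ▸ g2)
    have e1 := h4 _ g1
    have e2 := g4 _ h1
    exact ha.injective (by omega)
  · intro r
    obtain ⟨B, hB1, h1, h2, h3, h4⟩ := hB r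
    exact h3
  · intro r
    obtain ⟨B, hB1, h1, h2, h3, h4⟩ := hB r
    exact M.par B hB1 _ h1 _ h2
  · intro q r hlt hlt2
    by_contra hcon
    obtain ⟨B, hB1, h1, h2, h3, h4⟩ := hB q
    obtain ⟨C, hC1, g1, g2, g3, g4⟩ := hB r
    obtain rfl := M.nc (a q) (a r) (b q) (b r) hlt hlt2 (by omega) B hB1 C hC1 h1 h2 g1 g2
    have := h4 _ g1
    omega

theorem merged_bij {n : ℕ} {P : Finset (Finset ℕ)} (M : Merged n P) {a b : Fin (n - 1) → ℕ}
    (ha : StrictMono a) (hab : ∀ r, (a r, b r) ∈ pairsOf P)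
    (hsurj : ∀ p ∈ pairsOf P, ∃ r, (a r, b r) = p) (I : Finset ℕ) :
    (I ∈ (Finset.Icc 1 (2 * n)).powersetCard (n - 1) ∧ ∀ B ∈ P, (B \ I).card = 1) ↔
      ∃ s, Function.Injective (pick a b s) ∧ Finset.univ.image (pick a b s) = I := by
  have hB : ∀ r, ∃ B ∈ P, a r ∈ B ∧ b r ∈ B ∧ a r < b r ∧ ∀ z ∈ B, z ≤ a r ∨ b r ≤ z := by
    intro r
    obtain ⟨B, hB, h⟩ := (mem_pairsOf _ _).mp (hab r)
    exact ⟨B, hB, (mem_blockPairs _ _ _).mp h⟩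
  choose bl hbl hbla hblb hablt hcons using hB
  have hpick : ∀ s r, pick a b s r ∈ bl r := by
    intro s r; unfold pick; split_ifs
    · exact hbla r
    · exact hblb r
  have S := merged_arcSys M ha hab
  constructor
  · rintro ⟨hI, hc⟩
    rw [Finset.mem_powersetCard] at hI
    have ho : ∀ r, ∃ o, bl r \ I = {o} := fun r => Finset.card_eq_one.mp (hc _ (hbl r))
    choose o ho using ho
    have hmem : ∀ r, o r ∈ bl r ∧ o r ∉ I := by
      intro r
      rw [← Finset.mem_sdiff, ho]; simp
    have hin : ∀ r x, x ∈ bl r → x ≠ o r → x ∈ I := by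
      intro r x hx hne
      by_contra hxI
      have : x ∈ bl r \ I := Finset.mem_sdiff.mpr ⟨hx, hxI⟩
      rw [ho] at this
      exact hne (by simpa using this)
    let s : Finset (Fin (n - 1)) := Finset.univ.filter fun r => a r < o r
    have hs : ∀ r, r ∈ s ↔ a r < o r := fun r => by simp [s]
    have hinj : Function.Injective (pick a b s) := by
      intro q r hqr
      have hbb : bl q = bl r := M.uniq _ (hbl q) _ (hbl r) (pick a b s q) (hpick s q)
        (hqr ▸ hpick s r)
      have hoo : o q = o r := by
        have := ho q
        rw [hbb, ho r] at this
        simpa using this.symm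
      have h1 := hablt q
      have h2 := hablt r
      unfold pick at hqr
      simp only [hs] at hqr
      split_ifs at hqr
      · exact ha.injective hqr
      · omega
      · omega
      · exact S.inj hqr
    refine ⟨s, hinj, ?_⟩
    apply Finset.eq_of_subset_of_card_le
    · intro x hx
      obtain ⟨r, -, rfl⟩ := Finset.mem_image.mp hx
      apply hin r _ (hpick s r)
      have h1 := hablt r
      unfold pick
      simp only [hs]
      split_ifs <;> omega
    · rw [hI.2, Finset.card_image_of_injective _ hinj]; simp
  · rintro ⟨s, hinj, rfl⟩
    refine ⟨?_, ?_⟩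
    · rw [Finset.mem_powersetCard, Finset.card_image_of_injective _ hinj]
      refine ⟨?_, by simp⟩
      intro x hx
      obtain ⟨r, -, rfl⟩ := Finset.mem_image.mp hx
      exact M.sub _ (hbl r) (hpick s r)
    · intro B hBP
      have hcard := card_blockPairs B (M.ne B hBP)
      have e1 : B ∩ Finset.univ.image (pick a b s)
          = (Finset.univ.filter fun r => bl r = B).image (pick a b s) := by
        ext x
        simp only [Finset.mem_inter, Finset.mem_image, Finset.mem_filter, Finset.mem_univ, true_and]
        constructor
        · rintro ⟨hx, r, rfl⟩
          exact ⟨r, M.uniq _ (hbl r) _ hBP _ (hpick s r) hx, rfl⟩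
        · rintro ⟨r, rfl, rfl⟩
          exact ⟨hpick s r, r, rfl⟩
      have e2 : blockPairs B = (Finset.univ.filter fun r => bl r = B).image (fun r => (a r, b r)) := by
        ext ⟨x, y⟩
        simp only [Finset.mem_image, Finset.mem_filter, Finset.mem_univ, true_and]
        constructor
        · intro hxy
          obtain ⟨r, hr⟩ := hsurj (x, y) ((mem_pairsOf _ _).mpr ⟨B, hBP, hxy⟩)
          refine ⟨r, ?_, hr⟩
          rw [← hr, mem_blockPairs] at hxy
          exact M.uniq _ (hbl r) _ hBP _ (hbla r) hxy.1
        · rintro ⟨r, rfl, hr⟩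
          rw [← hr, mem_blockPairs]
          exact ⟨hbla r, hblb r, hablt r, hcons r⟩
      have e3 := Finset.card_sdiff_add_card_inter B (Finset.univ.image (pick a b s))
      rw [e1, Finset.card_image_of_injective _ hinj] at e3
      rw [e2, Finset.card_image_of_injective _ (fun q r h => ha.injective (Prod.ext_iff.mp h).1)] at hcard
      omega

theorem algorithm_for_concordance_vectors (n : ℕ) (hn : 2 ≤ n)
    (σ σd : Finset (Finset ℕ)) (h : IsNCPair n σ σd) :
    (pairsOf (σ ∪ σd)).card = n - 1 ∧
    (∀ p ∈ pairsOf (σ ∪ σd), ∀ q ∈ pairsOf (σ ∪ σd), p.1 = q.1 → p = q) ∧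
    ∀ a b : Fin (n - 1) → ℕ, StrictMono a →
      (∀ r, (a r, b r) ∈ pairsOf (σ ∪ σd)) →
      (∀ p ∈ pairsOf (σ ∪ σd), ∃ r, (a r, b r) = p) →
      concVec n σ σd =
        ExteriorAlgebra.ιMulti ℝ (n - 1) fun r =>
          stdE n (a r) +
            ((-1 : ℝ) ^ ((Finset.Ioo (a r) (b r)).filter
                (fun t => t % 2 = (a r) % 2)).card) • stdE n (b r) := by
  have M := merged_of_pair h
  refine ⟨merged_card M, ?_, ?_⟩
  · rintro ⟨x, y⟩ hp ⟨x', y'⟩ hq he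
    exact Prod.ext he (merged_fst M hp hq he)
  · intro a b ha hab hsurj
    have S := merged_arcSys M ha hab
    have hbd : ∀ r, 1 ≤ a r ∧ b r ≤ 2 * n := by
      intro r
      obtain ⟨B, hB, hr⟩ := (mem_pairsOf _ _).mp (hab r)
      rw [mem_blockPairs] at hr
      have h1 := Finset.mem_Icc.mp (M.sub B hB hr.1)
      have h2 := Finset.mem_Icc.mp (M.sub B hB hr.2.1)
      exact ⟨h1.1, h2.2⟩
    rw [wedge_expand S (fun r => (-1 : ℝ) ^ ((Finset.Ioo (a r) (b r)).filter
                (fun t => t % 2 = (a r) % 2)).card)]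
    · unfold concVec
      symm
      refine Finset.sum_bij (fun s _ => Finset.univ.image (pick a b s)) ?_ ?_ ?_ ?_
      · intro s hs
        rw [Finset.mem_filter] at hs ⊢
        exact (merged_bij M ha hab hsurj _).mpr ⟨s, hs.2, rfl⟩
      · intro s hs t ht hst
        rw [Finset.mem_filter] at hs ht
        exact pick_image_inj S hs.2 ht.2 hst
      · intro I hI
        rw [Finset.mem_filter] at hI
        obtain ⟨s, hs, hsI⟩ := (merged_bij M ha hab hsurj I).mp hI
        exact ⟨s, Finset.mem_filter.mpr ⟨Finset.mem_univ _, hs⟩, hsI⟩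
      · intro s _
        rfl
    · intro r
      have e1 := arcCnt_eq hn S (fun r => (hbd r).1) (fun r => (hbd r).2) r
      have e2 := same_par_card (S.lt r) (S.par r)
      have e3 : ((Finset.Ioo (a r) (b r)).filter (fun t => t % 2 = (a r) % 2)).card
          = arcCnt a b (a r + 1) (b r - 1) := by omega
      simp only [e3]
end
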